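/- In the Intermediate regime (n^{3/2}V(A(n))/k(n) → λ and m(n)/(k(n)·n^{1/2}) → c for fixed constants λ, c > 0, with k(n)/√n → ∞), the total variation distance between the standard and planted balls-and-bins distributions satisfies TV_{A(n)}(m(n),n) → 2Φ((1/2)·√(λ/c + 1/(2c²))) − 1 as n → ∞, where Φ is the standard normal cumulative distribution function. -/

import Mathlib

/-!
Write `L` for the likelihood ratio of the planted to the standard distribution, so that the total
variation distance is `E (1 - L)⁺` under the standard distribution (`tvDist_eq`). The proof shows
that `L` is close in `L¹` to `exp (T - σ² / 2)`, where `σ² = λ / c + 1 / (2 c²)` and, with `a_i` the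
planting and `μ = m / n`,

  `T = ∑ (a_i - k / n) z_i / μ - (k / n) (∑ z_i (z_i - 1) - m (m - 1) / n) / (2 μ²)`,

and that `T` is asymptotically `N(0, σ²)` under the standard distribution. The limit is then
`E (1 - exp (N - σ² / 2))⁺ = 2 Φ(σ / 2) - 1` for `N ~ N(0, σ²)` (`gaussian_tv`).

*Central limit theorem.* Size biasing (`stExp_sizeBias`) replaces `E[T exp (i s T)]` by an expectation
over one ball less in which `T` only appears through its increments. Expanding in these increments
shows that the characteristic function `ψ` of `T` nearly solves `ψ' = -σ² s ψ` (`quadChf_ode`), hence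
is nearly Gaussian (`gaussian_of_ode`, `tendsto_quadChf`); the continuity theorem for characteristic
functions gives weak convergence (`tendsto_stExp_of_chf`).

*Approximating the likelihood ratio.* No pointwise expansion of `L` is needed. For any `G`,
`(√L - √(exp G))² ≤ L (log L - G) - L + exp G` (`hellinger_le_entropy`), so under the standard
distribution `E (√L - √(exp G))² ≤ KL - E_PL G - 1 + E exp G`, where `E_PL` is the planted expectation
and `KL` the relative entropy. With `G = min T K - σ² / 2`, the right side is asymptotically at most
`O(1 / K)` provided `E_PL T → σ²` and `E_PL T²` is bounded (`planted_moments`), and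
`limsup KL ≤ σ² / 2`. This step is `tendsto_tvDist_of_stat`.

*Relative entropy.* `log L` is a sum of logarithms of bin loads. A fifth-order upper bound for the
logarithm together with the exact central moments of binomial variables bounds `KL`
(`stExp_log_likRatio_le`). The error terms vanish because `k ≥ n / 2` eventually (`planted_ge_half`):
a sparser integer planting has too large a variance for the intermediate regime.
-/

open Finset Filter Topology

/-- Probability of configuration `z` of `m` balls in `n` bins under the standard
(uniform multinomial) distribution ST(m,n). -/
noncomputable def stProb (n m : ℕ) (z : Fin n → ℕ) : ℝ :=
  if ∑ i, z i = m then
    ((Nat.factorial m : ℝ) / ∏ i, (Nat.factorial (z i) : ℝ)) * ((n : ℝ))⁻¹ ^ m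
  else 0

/-- Probability of configuration `z` of `m` balls in `n` bins under the planted
distribution PL_A(m,n) with planting `a`. -/
noncomputable def plProb (n m : ℕ) (a : Fin n → ℕ) (z : Fin n → ℕ) : ℝ :=
  if (∑ i, z i = m) ∧ (∀ i, a i ≤ z i) then
    ((Nat.factorial (m - ∑ i, a i) : ℝ) / ∏ i, (Nat.factorial (z i - a i) : ℝ)) *
      ((n : ℝ))⁻¹ ^ (m - ∑ i, a i)
  else 0

/-- Expectation of a statistic `T` with respect to a probability function `p` on
configurations. -/
noncomputable def expec {n : ℕ} (p : (Fin n → ℕ) → ℝ) (T : (Fin n → ℕ) → ℝ) : ℝ :=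
  ∑' z : Fin n → ℕ, p z * T z

/-- Variance of a statistic `T` with respect to a probability function `p`. -/
noncomputable def varOf {n : ℕ} (p : (Fin n → ℕ) → ℝ) (T : (Fin n → ℕ) → ℝ) : ℝ :=
  ∑' z : Fin n → ℕ, p z * (T z - expec p T) ^ 2

/-- Probability of a set `s` of configurations with respect to a probability
function `p`. -/
noncomputable def probOf {n : ℕ} (p : (Fin n → ℕ) → ℝ) (s : Set (Fin n → ℕ)) : ℝ :=
  ∑' z : Fin n → ℕ, Set.indicator s p z

/-- `V(A) = (Σ_i a_i²)/n − k²/n²` where `k = Σ_i a_i`. -/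
noncomputable def plantV (n : ℕ) (a : Fin n → ℕ) : ℝ :=
  (∑ i, (a i : ℝ) ^ 2) / n - ((∑ i, (a i : ℝ)) / n) ^ 2

/-- `q_i = (n/m)(z_i − m/n)`. -/
noncomputable def qStat (n m : ℕ) (z : Fin n → ℕ) (i : Fin n) : ℝ :=
  ((n : ℝ) / m) * ((z i : ℝ) - (m : ℝ) / n)

/-- The Hilly-regime statistic `H_A(Z) = Σ_i a_i q_i`. -/
noncomputable def HStat (n m : ℕ) (a : Fin n → ℕ) (z : Fin n → ℕ) : ℝ :=
  ∑ i, (a i : ℝ) * qStat n m z i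

/-- The Flat-regime statistic `F_A(Z) = Σ_i a_i q_i²`. -/
noncomputable def FStat (n m : ℕ) (a : Fin n → ℕ) (z : Fin n → ℕ) : ℝ :=
  ∑ i, (a i : ℝ) * qStat n m z i ^ 2

/-- The Intermediate-regime statistic `I_A(Z) = Σ_i a_i q_i − (1/2) Σ_i a_i q_i²`. -/
noncomputable def IStat (n m : ℕ) (a : Fin n → ℕ) (z : Fin n → ℕ) : ℝ :=
  HStat n m a z - (1/2) * FStat n m a z

/-- The standard normal cumulative distribution function `Φ`. -/
noncomputable def stdNormalCDF (x : ℝ) : ℝ :=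
  ∫ t in Set.Iic x, Real.exp (-t ^ 2 / 2) / Real.sqrt (2 * Real.pi)

/-- Total variation distance `TV_A(m,n)` between ST(m,n) and PL_A(m,n). -/
noncomputable def tvDist (n m : ℕ) (a : Fin n → ℕ) : ℝ :=
  (1/2) * ∑' z : Fin n → ℕ, |stProb n m z - plProb n m a z|

/-- The Flat regime: `n^{3/2} V(A)/k → 0` and `m/(k n^{1/2}) → c`. -/
def FlatRegime (A : (n : ℕ) → Fin n → ℕ) (m k : ℕ → ℕ) (c : ℝ) : Prop :=
  Tendsto (fun n : ℕ => (n : ℝ) ^ ((3 : ℝ)/2) * plantV n (A n) / (k n : ℝ)) atTop (𝓝 0) ∧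
  Tendsto (fun n : ℕ => (m n : ℝ) / ((k n : ℝ) * Real.sqrt n)) atTop (𝓝 c)

/-- The Intermediate regime: `n^{3/2} V(A)/k → λ` and `m/(k n^{1/2}) → c`. -/
def IntermediateRegime (A : (n : ℕ) → Fin n → ℕ) (m k : ℕ → ℕ) (lam c : ℝ) : Prop :=
  Tendsto (fun n : ℕ => (n : ℝ) ^ ((3 : ℝ)/2) * plantV n (A n) / (k n : ℝ)) atTop (𝓝 lam) ∧
  Tendsto (fun n : ℕ => (m n : ℝ) / ((k n : ℝ) * Real.sqrt n)) atTop (𝓝 c)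

/-- The Hilly regime: `n^{3/2} V(A)/k → ∞` and `m/(V(A) n²) → c`. -/
def HillyRegime (A : (n : ℕ) → Fin n → ℕ) (m k : ℕ → ℕ) (c : ℝ) : Prop :=
  Tendsto (fun n : ℕ => (n : ℝ) ^ ((3 : ℝ)/2) * plantV n (A n) / (k n : ℝ)) atTop atTop ∧
  Tendsto (fun n : ℕ => (m n : ℝ) / (plantV n (A n) * (n : ℝ) ^ 2)) atTop (𝓝 c)

/-- One of the three regimes holds (with its positive constants). -/
def SomeRegime (A : (n : ℕ) → Fin n → ℕ) (m k : ℕ → ℕ) : Prop :=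
  (∃ c : ℝ, 0 < c ∧ FlatRegime A m k c) ∨
  (∃ lam c : ℝ, 0 < lam ∧ 0 < c ∧ IntermediateRegime A m k lam c) ∨
  (∃ c : ℝ, 0 < c ∧ HillyRegime A m k c)

/-! ### Expectation under the standard distribution -/

/-- Expectation of `F` under `ST(M,n)`, as a finite sum over the configurations of `M` balls in
`n` bins. It is vector valued so that it also covers characteristic functions. -/
noncomputable def stExp (n M : ℕ) {V : Type*} [AddCommGroup V] [Module ℝ V]
    (F : (Fin n → ℕ) → V) : V :=
  ∑ z ∈ piAntidiag univ M, stProb n M z • F z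

lemma mem_confs {n M : ℕ} {z : Fin n → ℕ} :
    z ∈ piAntidiag (univ : Finset (Fin n)) M ↔ ∑ i, z i = M := by
  simp

lemma stProb_pos {n M : ℕ} (hn : 0 < n) {z : Fin n → ℕ} (hz : ∑ i, z i = M) :
    0 < stProb n M z := by
  unfold stProb
  rw [if_pos hz]
  have : (0 : ℝ) < n := by exact_mod_cast hn
  have h2 : (0 : ℝ) < ∏ i, (Nat.factorial (z i) : ℝ) :=
    Finset.prod_pos fun i _ => by exact_mod_cast Nat.factorial_pos _
  have h3 : (0 : ℝ) < Nat.factorial M := by exact_mod_cast Nat.factorial_pos _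
  positivity

lemma stProb_nonneg (n M : ℕ) (z : Fin n → ℕ) : 0 ≤ stProb n M z := by
  unfold stProb
  split_ifs <;> positivity

section
variable {n M : ℕ} {V : Type*} [AddCommGroup V] [Module ℝ V]

lemma stExp_congr {F G : (Fin n → ℕ) → V} (h : ∀ z, ∑ i, z i = M → F z = G z) :
    stExp n M F = stExp n M G :=
  Finset.sum_congr rfl fun z hz => by rw [h z (mem_confs.1 hz)]

lemma stExp_add (F G : (Fin n → ℕ) → V) :
    stExp n M (fun z => F z + G z) = stExp n M F + stExp n M G := by
  simp [stExp, smul_add, Finset.sum_add_distrib]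

lemma stExp_sub (F G : (Fin n → ℕ) → V) :
    stExp n M (fun z => F z - G z) = stExp n M F - stExp n M G := by
  simp [stExp, smul_sub, Finset.sum_sub_distrib]

lemma stExp_sum {ι : Type*} (s : Finset ι) (F : ι → (Fin n → ℕ) → V) :
    stExp n M (fun z => ∑ i ∈ s, F i z) = ∑ i ∈ s, stExp n M (F i) := by
  simp only [stExp, Finset.smul_sum]
  exact Finset.sum_comm

lemma stExp_mul (c : ℝ) (F : (Fin n → ℕ) → ℝ) :
    stExp n M (fun z => c * F z) = c * stExp n M F := by
  simp only [stExp, Finset.mul_sum, smul_eq_mul]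
  exact Finset.sum_congr rfl fun z _ => by ring

lemma stExp_mul_complex (c : ℂ) (F : (Fin n → ℕ) → ℂ) :
    stExp n M (fun z => c * F z) = c * stExp n M F := by
  simp only [stExp, Finset.mul_sum, Complex.real_smul]
  exact Finset.sum_congr rfl fun z _ => by ring

lemma stExp_mono {F G : (Fin n → ℕ) → ℝ} (h : ∀ z, ∑ i, z i = M → F z ≤ G z) :
    stExp n M F ≤ stExp n M G :=
  Finset.sum_le_sum fun z hz =>
    mul_le_mul_of_nonneg_left (h z (mem_confs.1 hz)) (stProb_nonneg _ _ _)

lemma stExp_nonneg {F : (Fin n → ℕ) → ℝ} (h : ∀ z, ∑ i, z i = M → 0 ≤ F z) :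
    0 ≤ stExp n M F :=
  Finset.sum_nonneg fun z hz => mul_nonneg (stProb_nonneg _ _ _) (h z (mem_confs.1 hz))

lemma norm_stExp_le (F : (Fin n → ℕ) → ℂ) :
    ‖stExp n M F‖ ≤ stExp n M (fun z => ‖F z‖) := by
  refine (norm_sum_le _ _).trans (Finset.sum_le_sum fun z _ => ?_)
  rw [norm_smul, Real.norm_of_nonneg (stProb_nonneg _ _ _), smul_eq_mul]

lemma abs_stExp_le (F : (Fin n → ℕ) → ℝ) :
    |stExp n M F| ≤ stExp n M (fun z => |F z|) := by
  refine (Finset.abs_sum_le_sum_abs _ _).trans (Finset.sum_le_sum fun z _ => ?_)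
  rw [smul_eq_mul, abs_mul, abs_of_nonneg (stProb_nonneg _ _ _), smul_eq_mul]

/-- Adding a ball to bin `x` changes the multinomial weight by the factor
`(M + 1) / (n (z x + 1))`. -/
lemma stProb_add_single (z : Fin n → ℕ) (x : Fin n) :
    stProb n (M + 1) (z + Pi.single x 1) * ((z x : ℝ) + 1)
      = ((M + 1 : ℝ) / n) * stProb n M z := by
  have hsum : ∑ i, (z + Pi.single x 1 : Fin n → ℕ) i = ∑ i, z i + 1 := by
    simp [Finset.sum_add_distrib]
  have hprod : ∏ i, (Nat.factorial ((z + Pi.single x 1 : Fin n → ℕ) i) : ℝ)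
      = ((z x : ℝ) + 1) * ∏ i, (Nat.factorial (z i) : ℝ) := by
    rw [← Finset.mul_prod_erase univ _ (mem_univ x), ← Finset.mul_prod_erase univ
      (fun i => (Nat.factorial (z i) : ℝ)) (mem_univ x), ← mul_assoc]
    congr 1
    · simp [Nat.factorial_succ]
    · refine Finset.prod_congr rfl fun i hi => ?_
      simp [(Finset.mem_erase.1 hi).1]
  unfold stProb
  rw [hsum, hprod]
  by_cases h : ∑ i, z i = M
  · rw [if_pos (by rw [h]), if_pos h, Nat.factorial_succ, pow_succ]
    have h2 : ∏ i, (Nat.factorial (z i) : ℝ) ≠ 0 :=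
      Finset.prod_ne_zero_iff.2 fun i _ => by exact_mod_cast Nat.factorial_ne_zero _
    have h3 : (z x : ℝ) + 1 ≠ 0 := by positivity
    push_cast
    field_simp
  · rw [if_neg (by simpa using h), if_neg h]; simp

/-- Size biasing: weighting by the load of bin `x` amounts to removing one ball and putting it
back into bin `x`. -/
lemma stExp_sizeBias (x : Fin n) (h : (Fin n → ℕ) → V) :
    stExp n (M + 1) (fun z => (z x : ℝ) • h z)
      = ((M + 1 : ℝ) / n) • stExp n M (fun z => h (z + Pi.single x 1)) := by
  unfold stExp
  rw [Finset.smul_sum]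
  have key : ∀ z : Fin n → ℕ, ((M + 1 : ℝ) / n) • stProb n M z • h (z + Pi.single x 1)
      = stProb n (M + 1) (z + Pi.single x 1) •
        ((((z + Pi.single x 1 : Fin n → ℕ) x : ℕ) : ℝ) • h (z + Pi.single x 1)) := by
    intro z
    rw [smul_smul, smul_smul, ← stProb_add_single z x]
    simp
  simp_rw [key]
  symm
  rw [← Finset.sum_image (f := fun z => stProb n (M + 1) z • ((z x : ℝ) • h z))
    (g := fun z : Fin n → ℕ => z + Pi.single x 1) (fun a _ b _ hab => add_right_cancel hab)]
  refine Finset.sum_subset ?_ ?_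
  · intro z hz
    obtain ⟨w, hw, rfl⟩ := Finset.mem_image.1 hz
    rw [mem_confs] at hw ⊢
    simp [Finset.sum_add_distrib, hw]
  · intro z hz hz'
    -- a configuration that is not of the form `w + e_x` has an empty bin `x`
    have : z x = 0 := by
      by_contra h0
      apply hz'
      have hle : Pi.single x 1 ≤ z := by
        intro i
        by_cases hi : i = x
        · subst hi; simp; omega
        · simp [hi]
      refine Finset.mem_image.2 ⟨z - Pi.single x 1, ?_, tsub_add_cancel_of_le hle⟩
      rw [mem_confs] at hz ⊢
      have h1 : ∑ i, (z - Pi.single x 1 + Pi.single x 1 : Fin n → ℕ) i = M + 1 := by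
        rw [tsub_add_cancel_of_le hle]; exact hz
      simp only [Pi.add_apply, Finset.sum_add_distrib] at h1
      simpa using h1
    simp [this]

/-- Conditioning on the last ball. -/
lemma stExp_succ (F : (Fin n → ℕ) → V) :
    stExp n (M + 1) F = (1 / n : ℝ) • ∑ x, stExp n M (fun z => F (z + Pi.single x 1)) := by
  have h1 : stExp n (M + 1) (fun z => ∑ x, (z x : ℝ) • F z) = (M + 1 : ℝ) • stExp n (M + 1) F := by
    unfold stExp
    rw [Finset.smul_sum]
    refine Finset.sum_congr rfl fun z hz => ?_
    rw [mem_confs] at hz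
    simp only
    rw [← Finset.sum_smul, smul_comm]
    congr 2
    exact_mod_cast hz
  rw [stExp_sum] at h1
  simp_rw [stExp_sizeBias] at h1
  rw [← Finset.smul_sum] at h1
  have h2 : (M + 1 : ℝ) ≠ 0 := by positivity
  have h3 : (M + 1 : ℝ) / n = (M + 1 : ℝ) * (1 / n : ℝ) := by ring
  rw [h3, mul_smul] at h1
  exact (smul_right_injective V h2 h1).symm

lemma stExp_zero (F : (Fin n → ℕ) → V) : stExp n 0 F = F 0 := by
  simp [stExp, stProb]

lemma stExp_const (hn : 0 < n) (M : ℕ) (v : V) : stExp n M (fun _ => v) = v := by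
  induction M with
  | zero => exact stExp_zero _
  | succ M ih =>
    rw [stExp_succ, ih]
    have : (n : ℝ) ≠ 0 := by positivity
    simp [← Nat.cast_smul_eq_nsmul ℝ, smul_smul, this]

lemma stExp_abs_le_sqrt (hn : 0 < n) (F : (Fin n → ℕ) → ℝ) :
    stExp n M (fun z => |F z|) ≤ √(stExp n M (fun z => F z ^ 2)) := by
  apply Real.le_sqrt_of_sq_le
  set e := stExp n M (fun z => |F z|) with he
  have h : 0 ≤ stExp n M (fun z => F z ^ 2 - 2 * e * |F z| + e ^ 2) := by
    refine stExp_nonneg fun z _ => ?_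
    nlinarith [sq_nonneg (|F z| - e), sq_abs (F z)]
  rw [stExp_add, stExp_sub, stExp_mul, stExp_const hn, ← he] at h
  nlinarith

end

/-! ### Central moments of a bin load -/

lemma stExp_succ_coord {n M : ℕ} (hn : 0 < n) (x : Fin n) (f : ℕ → ℝ) :
    stExp n (M + 1) (fun z => f (z x))
      = stExp n M (fun z => (1 / n : ℝ) * f (z x + 1) + (1 - 1 / n : ℝ) * f (z x)) := by
  have hn' : (n : ℝ) ≠ 0 := by positivity
  rw [stExp_succ, ← stExp_sum, smul_eq_mul, ← stExp_mul]
  refine stExp_congr fun z _ => ?_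
  have h : ∀ y : Fin n, f ((z + Pi.single y 1 : Fin n → ℕ) x)
      = f (z x) + (if x = y then f (z x + 1) - f (z x) else 0) := by
    intro y
    by_cases hy : x = y
    · subst hy; simp
    · simp [hy]
  simp_rw [h]
  rw [Finset.sum_add_distrib, Finset.sum_ite_eq]
  simp
  field_simp
  ring

/-- The recursion for the `j`-th central moment when a ball is added. -/
lemma centralMoment_succ {n M : ℕ} (hn : 0 < n) (x : Fin n) (j : ℕ) :
    stExp n (M + 1) (fun z => ((z x : ℝ) - ((M + 1 : ℕ) : ℝ) / n) ^ j)
      = stExp n M (fun z => (1 / n : ℝ) * (((z x : ℝ) - (M : ℝ) / n) + (1 - 1 / n)) ^ j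
          + (1 - 1 / n : ℝ) * (((z x : ℝ) - (M : ℝ) / n) - 1 / n) ^ j) := by
  rw [stExp_succ_coord hn x (fun y => ((y : ℝ) - ((M + 1 : ℕ) : ℝ) / n) ^ j)]
  refine stExp_congr fun z _ => ?_
  push_cast
  congr 3 <;> ring

/-- The first five central moments of the load of a bin, which is binomial with parameters `M` and
`p = 1 / n`. -/
lemma centralMoments {n : ℕ} (hn : 0 < n) (M : ℕ) (x : Fin n) (p : ℝ) (hp : p = 1 / n) :
    stExp n M (fun z => ((z x : ℝ) - (M : ℝ) / n)) = 0 ∧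
    stExp n M (fun z => ((z x : ℝ) - (M : ℝ) / n) ^ 2) = M * (p * (1 - p)) ∧
    stExp n M (fun z => ((z x : ℝ) - (M : ℝ) / n) ^ 3) = M * (p * (1 - p)) * (1 - 2 * p) ∧
    stExp n M (fun z => ((z x : ℝ) - (M : ℝ) / n) ^ 4)
      = 3 * (M * (p * (1 - p))) ^ 2 + M * (p * (1 - p)) * (1 - 6 * (p * (1 - p))) ∧
    stExp n M (fun z => ((z x : ℝ) - (M : ℝ) / n) ^ 5)
      = M * (p * (1 - p)) * (1 - 2 * p) *
        (1 + 10 * (M * (p * (1 - p))) - 12 * (p * (1 - p))) := by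
  induction M with
  | zero => simp [stExp_zero]
  | succ M ih =>
    obtain ⟨h1, h2, h3, h4, h5⟩ := ih
    refine ⟨?_, ?_, ?_, ?_, ?_⟩
    · have := centralMoment_succ (M := M) hn x 1
      simp only [pow_one] at this
      rw [this, ← hp, ← h1]
      exact stExp_congr fun z _ => by ring
    · rw [centralMoment_succ hn x 2, ← hp, stExp_congr (G := fun z =>
        ((z x : ℝ) - (M : ℝ) / n) ^ 2 + p * (1 - p)) (fun z _ => by ring),
        stExp_add, stExp_const hn, h2]
      push_cast; ring
    · rw [centralMoment_succ hn x 3, ← hp, stExp_congr (G := fun z =>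
        ((z x : ℝ) - (M : ℝ) / n) ^ 3 + (3 * (p * (1 - p))) * ((z x : ℝ) - (M : ℝ) / n)
          + p * (1 - p) * (1 - 2 * p)) (fun z _ => by ring),
        stExp_add, stExp_add, stExp_mul, stExp_const hn, h1, h3]
      push_cast; ring
    · rw [centralMoment_succ hn x 4, ← hp, stExp_congr (G := fun z =>
        ((z x : ℝ) - (M : ℝ) / n) ^ 4 + (6 * (p * (1 - p))) * ((z x : ℝ) - (M : ℝ) / n) ^ 2
          + (4 * (p * (1 - p) * (1 - 2 * p))) * ((z x : ℝ) - (M : ℝ) / n)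
          + p * (1 - p) * (1 - 3 * (p * (1 - p)))) (fun z _ => by ring),
        stExp_add, stExp_add, stExp_add, stExp_mul, stExp_mul, stExp_const hn, h1, h2, h4]
      push_cast; ring
    · rw [centralMoment_succ hn x 5, ← hp, stExp_congr (G := fun z =>
        ((z x : ℝ) - (M : ℝ) / n) ^ 5 + (10 * (p * (1 - p))) * ((z x : ℝ) - (M : ℝ) / n) ^ 3
          + (10 * (p * (1 - p) * (1 - 2 * p))) * ((z x : ℝ) - (M : ℝ) / n) ^ 2
          + (5 * (p * (1 - p) * (1 - 3 * (p * (1 - p))))) * ((z x : ℝ) - (M : ℝ) / n)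
          + p * (1 - p) * (1 - 2 * p) * (1 - 2 * (p * (1 - p)))) (fun z _ => by ring),
        stExp_add, stExp_add, stExp_add, stExp_add, stExp_mul, stExp_mul, stExp_mul,
        stExp_const hn, h1, h2, h3, h5]
      push_cast; ring

/-! ### The linear-plus-quadratic statistic -/

/-- The statistic `∑ α_x z_x + (β/2) (∑ z_x (z_x - 1) - M (M - 1) / n)`. In terms of the single
balls `X_j` it is `∑_j α(X_j) + β ∑_{j<l} (1{X_j = X_l} - 1/n)`. -/
noncomputable def quadStat (n M : ℕ) (α : Fin n → ℝ) (β : ℝ) (z : Fin n → ℕ) : ℝ :=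
  ∑ x, α x * z x + β / 2 * (∑ x, (z x : ℝ) * ((z x : ℝ) - 1) - (M : ℝ) * ((M : ℝ) - 1) / n)

/-- The increment of `quadStat` when a ball is added to bin `x`, `N` balls being present. -/
noncomputable def quadIncr (n N : ℕ) (α : Fin n → ℝ) (β : ℝ) (x : Fin n) (z : Fin n → ℕ) : ℝ :=
  α x + β * ((z x : ℝ) - (N : ℝ) / n)

lemma sum_cast {n N : ℕ} {z : Fin n → ℕ} (hz : ∑ i, z i = N) : ∑ i, (z i : ℝ) = N := by
  exact_mod_cast hz

lemma sum_quadIncr {n N : ℕ} (hn : 0 < n) {α : Fin n → ℝ} (hα : ∑ x, α x = 0) (β : ℝ)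
    {z : Fin n → ℕ} (hz : ∑ i, z i = N) : ∑ x, quadIncr n N α β x z = 0 := by
  have hn' : (n : ℝ) ≠ 0 := by positivity
  simp only [quadIncr, Finset.sum_add_distrib, ← Finset.mul_sum, Finset.sum_sub_distrib, hα,
    sum_cast hz]
  simp
  right; field_simp; ring

lemma quadStat_add_single {n N : ℕ} (α : Fin n → ℝ) (β : ℝ) (x : Fin n) (z : Fin n → ℕ) :
    quadStat n (N + 1) α β (z + Pi.single x 1) = quadStat n N α β z + quadIncr n N α β x z := by
  unfold quadStat quadIncr
  have h1 : ∑ y, α y * (((z + Pi.single x 1 : Fin n → ℕ) y : ℕ) : ℝ) = ∑ y, α y * z y + α x := by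
    have : ∀ y, α y * (((z + Pi.single x 1 : Fin n → ℕ) y : ℕ) : ℝ)
        = α y * z y + (if x = y then α y else 0) := by
      intro y
      by_cases hy : x = y
      · subst hy; simp; ring
      · simp [hy]
    simp_rw [this, Finset.sum_add_distrib]
    simp
  have h2 : ∑ y, (((z + Pi.single x 1 : Fin n → ℕ) y : ℕ) : ℝ) *
      ((((z + Pi.single x 1 : Fin n → ℕ) y : ℕ) : ℝ) - 1)
        = ∑ y, (z y : ℝ) * ((z y : ℝ) - 1) + 2 * z x := by
    have : ∀ y, (((z + Pi.single x 1 : Fin n → ℕ) y : ℕ) : ℝ) *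
      ((((z + Pi.single x 1 : Fin n → ℕ) y : ℕ) : ℝ) - 1)
        = (z y : ℝ) * ((z y : ℝ) - 1) + (if x = y then 2 * (z y : ℝ) else 0) := by
      intro y
      by_cases hy : x = y
      · subst hy; simp; ring
      · simp [hy]
    simp_rw [this, Finset.sum_add_distrib]
    simp
  rw [h1, h2]
  push_cast
  ring

lemma stExp_quadStat {n : ℕ} (hn : 0 < n) {α : Fin n → ℝ} (hα : ∑ x, α x = 0) (β : ℝ) (M : ℕ) :
    stExp n M (quadStat n M α β) = 0 := by
  induction M with
  | zero => simp [stExp_zero, quadStat]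
  | succ M ih =>
    rw [stExp_succ, ← stExp_sum]
    rw [stExp_congr (G := fun z => n * quadStat n M α β z), stExp_mul, ih]
    · simp
    · intro z hz
      simp_rw [quadStat_add_single, Finset.sum_add_distrib, sum_quadIncr hn hα β hz]
      simp

lemma stExp_sum_quadIncr_sq {n : ℕ} (hn : 0 < n) (α : Fin n → ℝ) (β : ℝ) (N : ℕ) :
    (1 / n : ℝ) * ∑ x, stExp n N (fun z => quadIncr n N α β x z ^ 2)
      = (∑ x, α x ^ 2) / n + β ^ 2 * (N * (1 / n * (1 - 1 / n))) := by
  have hn' : (n : ℝ) ≠ 0 := by positivity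
  have : ∀ x : Fin n, stExp n N (fun z => quadIncr n N α β x z ^ 2)
      = α x ^ 2 + β ^ 2 * (N * (1 / n * (1 - 1 / n))) := by
    intro x
    obtain ⟨h1, h2, -⟩ := centralMoments hn N x _ rfl
    rw [stExp_congr (G := fun z => α x ^ 2 + (2 * α x * β) * ((z x : ℝ) - (N : ℝ) / n)
      + β ^ 2 * ((z x : ℝ) - (N : ℝ) / n) ^ 2) (fun z _ => by unfold quadIncr; ring),
      stExp_add, stExp_add, stExp_mul, stExp_mul, stExp_const hn, h1, h2]
    ring
  simp_rw [this, Finset.sum_add_distrib]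
  simp
  field_simp

/-- The variance of `quadStat`; its increments are martingale differences. -/
lemma stExp_quadStat_sq {n : ℕ} (hn : 0 < n) {α : Fin n → ℝ} (hα : ∑ x, α x = 0) (β : ℝ)
    (M : ℕ) :
    stExp n M (fun z => quadStat n M α β z ^ 2)
      = M * ((∑ x, α x ^ 2) / n) + β ^ 2 * (M * (M - 1) / 2 * (1 / n * (1 - 1 / n))) := by
  have hn' : (n : ℝ) ≠ 0 := by positivity
  induction M with
  | zero => simp [stExp_zero, quadStat]
  | succ M ih =>
    rw [stExp_succ, ← stExp_sum]
    rw [stExp_congr (G := fun z => n * quadStat n M α β z ^ 2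
      + ∑ x, quadIncr n M α β x z ^ 2), stExp_add, stExp_mul, ih, stExp_sum, smul_eq_mul, mul_add,
      stExp_sum_quadIncr_sq hn]
    · push_cast; field_simp; ring
    · intro z hz
      have h : ∀ x, quadStat n (M + 1) α β (z + Pi.single x 1) ^ 2
          = quadStat n M α β z ^ 2 + 2 * quadStat n M α β z * quadIncr n M α β x z
            + quadIncr n M α β x z ^ 2 := by
        intro x; rw [quadStat_add_single]; ring
      simp_rw [h, Finset.sum_add_distrib, ← Finset.mul_sum, sum_quadIncr hn hα β hz]
      simp

/-! ### Central limit theorem for the statistic under the standard distribution -/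

/-- The characteristic function of `quadStat` under `ST(M,n)`. -/
noncomputable def quadChf (n M : ℕ) (α : Fin n → ℝ) (β : ℝ) (s : ℝ) : ℂ :=
  stExp n M (fun z => Complex.exp (Complex.I * ((s * quadStat n M α β z : ℝ) : ℂ)))

lemma norm_exp_I_mul_sub_one_sub_le (x : ℝ) :
    ‖Complex.exp (Complex.I * x) - 1 - Complex.I * x‖ ≤ 2 * x ^ 2 := by
  by_cases hx : |x| ≤ 1
  · have h : ‖Complex.I * (x : ℂ)‖ = |x| := by simp
    have := Complex.norm_exp_sub_one_sub_id_le (x := Complex.I * x) (by rw [h]; exact hx)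
    rw [h, sq_abs] at this
    nlinarith [sq_nonneg x]
  · push Not at hx
    have h1 : ‖Complex.exp (Complex.I * x) - 1‖ ≤ |x| := Real.norm_exp_I_mul_ofReal_sub_one_le
    have h2 := norm_sub_le (Complex.exp (Complex.I * x) - 1) (Complex.I * x)
    have h : ‖Complex.I * (x : ℂ)‖ = |x| := by simp
    rw [h] at h2
    nlinarith [sq_abs x]

lemma norm_exp_I_mul_real (x : ℝ) : ‖Complex.exp (Complex.I * (x : ℂ))‖ = 1 := by
  rw [mul_comm]; exact Complex.norm_exp_ofReal_mul_I x

lemma hasDerivAt_quadChf (n M : ℕ) (α : Fin n → ℝ) (β : ℝ) (s : ℝ) :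
    HasDerivAt (quadChf n M α β) (Complex.I * stExp n M (fun z => quadStat n M α β z •
      Complex.exp (Complex.I * ((s * quadStat n M α β z : ℝ) : ℂ)))) s := by
  rw [← stExp_mul_complex]
  unfold quadChf stExp
  refine HasDerivAt.fun_sum fun z _ => ?_
  refine HasDerivAt.const_smul (stProb n M z) ?_
  have h1 : HasDerivAt (fun s : ℝ => ((s * quadStat n M α β z : ℝ) : ℂ))
      ((quadStat n M α β z : ℝ) : ℂ) s := by
    have := (hasDerivAt_mul_const (quadStat n M α β z) (x := s)).ofReal_comp
    exact this
  have h2 := (h1.const_mul Complex.I).cexp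
  refine h2.congr_deriv ?_
  simp only [Complex.real_smul]; ring

lemma quadStat_eq_sum {n N : ℕ} (α : Fin n → ℝ) (β : ℝ) {z : Fin n → ℕ}
    (hz : ∑ i, z i = N + 1) :
    quadStat n (N + 1) α β z
      = ∑ x, (z x : ℝ) * (α x + β / 2 * ((z x : ℝ) - 1 - (N : ℝ) / n)) := by
  have h : ∀ x, (z x : ℝ) * (α x + β / 2 * ((z x : ℝ) - 1 - (N : ℝ) / n))
      = α x * z x + β / 2 * ((z x : ℝ) * ((z x : ℝ) - 1)) - β / 2 * ((N : ℝ) / n) * z x := by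
    intro x; ring
  simp_rw [h, Finset.sum_sub_distrib, Finset.sum_add_distrib, ← Finset.mul_sum, sum_cast hz]
  unfold quadStat
  push_cast
  ring

/-- The coefficient in front of `-s ψ(s)` in the approximate differential equation for the
characteristic function `ψ`; it is concentrated around the limiting variance. -/
noncomputable def quadCoef (n N : ℕ) (α : Fin n → ℝ) (β : ℝ) (z : Fin n → ℕ) : ℝ :=
  ((N + 1 : ℝ) / n) * ∑ x, quadIncr n N α (β / 2) x z * quadIncr n N α β x z

/-- The characteristic function `ψ` of `quadStat` approximately solves `ψ' = -v s ψ`, the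
equation of the centred Gaussian of variance `v`: size biasing turns `E[T exp(isT)]` into an
expectation over one ball less, which is then expanded in the increment of the statistic. -/
lemma quadChf_ode {n N : ℕ} (hn : 0 < n) {α : Fin n → ℝ} (hα : ∑ x, α x = 0) (β v s : ℝ) :
    ‖Complex.I * stExp n (N + 1) (fun z => quadStat n (N + 1) α β z •
        Complex.exp (Complex.I * ((s * quadStat n (N + 1) α β z : ℝ) : ℂ)))
      + (v * s : ℝ) * quadChf n (N + 1) α β s‖
    ≤ 2 * s ^ 2 * (((N + 1 : ℝ) / n) *
          ∑ x, stExp n N (fun z => |quadIncr n N α (β / 2) x z| * quadIncr n N α β x z ^ 2))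
      + |s| * stExp n N (fun z => |quadCoef n N α β z - v|)
      + |v * s| * (|s| * ((1 / n : ℝ) * ∑ x, stExp n N (fun z => |quadIncr n N α β x z|))) := by
  set e : (Fin n → ℕ) → ℂ := fun z => Complex.exp (Complex.I * ((s * quadStat n N α β z : ℝ) : ℂ))
    with he
  have hne : ∀ z, ‖e z‖ = 1 := fun z => norm_exp_I_mul_real _
  set D : Fin n → (Fin n → ℕ) → ℝ := fun x z => quadIncr n N α β x z with hD
  set w : Fin n → (Fin n → ℕ) → ℝ := fun x z => quadIncr n N α (β / 2) x z with hw
  set f : Fin n → (Fin n → ℕ) → ℂ := fun x z => Complex.exp (Complex.I * ((s * D x z : ℝ) : ℂ))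
    with hf
  have hexp : ∀ x z, Complex.exp (Complex.I *
      ((s * quadStat n (N + 1) α β (z + Pi.single x 1) : ℝ) : ℂ)) = e z * f x z := by
    intro x z
    rw [quadStat_add_single, he, hf, ← Complex.exp_add]
    congr 1; push_cast; ring
  -- the expansion of `E[T exp(isT)]`
  have hA : stExp n (N + 1) (fun z => quadStat n (N + 1) α β z •
        Complex.exp (Complex.I * ((s * quadStat n (N + 1) α β z : ℝ) : ℂ)))
      = stExp n N (fun z => e z * ((((N + 1 : ℝ) / n : ℝ) : ℂ) *
          ∑ x, (w x z : ℂ) * (f x z - 1 - Complex.I * ((s * D x z : ℝ) : ℂ))))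
        + Complex.I * s * stExp n N (fun z => e z * (quadCoef n N α β z : ℂ)) := by
    rw [stExp_congr (G := fun z => ∑ x, (z x : ℝ) • ((α x + β / 2 * ((z x : ℝ) - 1 - (N : ℝ) / n)) •
      Complex.exp (Complex.I * ((s * quadStat n (N + 1) α β z : ℝ) : ℂ))))]
    · rw [stExp_sum]
      simp_rw [stExp_sizeBias, hexp]
      rw [← Finset.smul_sum, ← stExp_sum, Complex.real_smul, ← stExp_mul_complex,
        ← stExp_mul_complex, ← stExp_add]
      refine stExp_congr fun z hz => ?_
      have hw' : ∀ x, α x + β / 2 * ((((z + Pi.single x 1 : Fin n → ℕ) x : ℕ) : ℝ) - 1 - (N : ℝ) / n)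
          = w x z := by
        intro x; simp [hw, quadIncr]
      simp_rw [hw']
      have h0 : ∑ x, (w x z : ℂ) = 0 := by
        exact_mod_cast sum_quadIncr hn hα (β / 2) hz
      have h1 : ∀ x, w x z • (e z * f x z)
          = e z * ((w x z : ℂ) * (f x z - 1 - Complex.I * ((s * D x z : ℝ) : ℂ)))
            + e z * (w x z : ℂ) + Complex.I * s * e z * (((w x z * D x z : ℝ)) : ℂ) := by
        intro x; rw [Complex.real_smul]; push_cast; ring
      simp_rw [h1, Finset.sum_add_distrib, ← Finset.mul_sum, h0]
      unfold quadCoef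
      push_cast
      ring
    · intro z hz
      rw [quadStat_eq_sum α β hz, Finset.sum_smul]
      exact Finset.sum_congr rfl fun x _ => by rw [mul_smul]
  -- comparison of the characteristic functions for `N + 1` and `N` balls
  have hB : quadChf n (N + 1) α β s = stExp n N e
      + ((1 / n : ℝ) : ℂ) * ∑ x, stExp n N (fun z => e z * (f x z - 1)) := by
    have hn' : (n : ℂ) ≠ 0 := by exact_mod_cast hn.ne'
    unfold quadChf
    rw [stExp_succ]
    simp_rw [hexp]
    rw [Complex.real_smul]
    have : ∀ x, stExp n N (fun z => e z * f x z)
        = stExp n N (fun z => e z * (f x z - 1)) + stExp n N e := by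
      intro x
      rw [← stExp_add]
      exact stExp_congr fun z _ => by ring
    simp_rw [this, Finset.sum_add_distrib]
    simp
    field_simp
    ring
  have hC : Complex.I * stExp n (N + 1) (fun z => quadStat n (N + 1) α β z •
        Complex.exp (Complex.I * ((s * quadStat n (N + 1) α β z : ℝ) : ℂ)))
      + (v * s : ℝ) * quadChf n (N + 1) α β s
      = Complex.I * stExp n N (fun z => e z * ((((N + 1 : ℝ) / n : ℝ) : ℂ) *
          ∑ x, (w x z : ℂ) * (f x z - 1 - Complex.I * ((s * D x z : ℝ) : ℂ))))
        + -(s : ℂ) * stExp n N (fun z => e z * ((quadCoef n N α β z - v : ℝ) : ℂ))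
        + ((v * s : ℝ) : ℂ) *
          (((1 / n : ℝ) : ℂ) * ∑ x, stExp n N (fun z => e z * (f x z - 1))) := by
    have h2 : stExp n N (fun z => e z * ((quadCoef n N α β z - v : ℝ) : ℂ))
        = stExp n N (fun z => e z * (quadCoef n N α β z : ℂ)) - v * stExp n N e := by
      rw [← stExp_mul_complex, ← stExp_sub]
      exact stExp_congr fun z _ => by push_cast; ring
    rw [hA, hB, h2, mul_add]
    push_cast
    linear_combination (s : ℂ) * stExp n N (fun z => e z * (quadCoef n N α β z : ℂ))
      * Complex.I_mul_I
  rw [hC]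
  refine (norm_add_le _ _).trans (add_le_add ((norm_add_le _ _).trans (add_le_add ?_ ?_)) ?_)
  · rw [norm_mul, Complex.norm_I, one_mul]
    refine (norm_stExp_le _).trans ?_
    rw [← stExp_sum, ← stExp_mul, ← stExp_mul]
    refine stExp_mono fun z _ => ?_
    rw [norm_mul, hne, one_mul, norm_mul, Complex.norm_of_nonneg (by positivity)]
    have : ‖∑ x, (w x z : ℂ) * (f x z - 1 - Complex.I * ((s * D x z : ℝ) : ℂ))‖
        ≤ 2 * s ^ 2 * ∑ x, |w x z| * D x z ^ 2 := by
      refine (norm_sum_le _ _).trans ?_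
      rw [Finset.mul_sum]
      refine Finset.sum_le_sum fun x _ => ?_
      rw [norm_mul, Complex.norm_real, Real.norm_eq_abs]
      have := norm_exp_I_mul_sub_one_sub_le (s * D x z)
      calc _ ≤ |w x z| * (2 * (s * D x z) ^ 2) := mul_le_mul_of_nonneg_left this (abs_nonneg _)
        _ = _ := by ring
    calc _ ≤ ((N + 1 : ℝ) / n) * (2 * s ^ 2 * ∑ x, |w x z| * D x z ^ 2) :=
          mul_le_mul_of_nonneg_left this (by positivity)
      _ = _ := by ring
  · rw [norm_mul, norm_neg, Complex.norm_real, Real.norm_eq_abs]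
    refine mul_le_mul_of_nonneg_left ((norm_stExp_le _).trans ?_) (abs_nonneg _)
    refine stExp_mono fun z _ => ?_
    rw [norm_mul, hne, one_mul, Complex.norm_real, Real.norm_eq_abs]
  · rw [norm_mul, Complex.norm_real, Real.norm_eq_abs]
    refine mul_le_mul_of_nonneg_left ?_ (abs_nonneg _)
    rw [norm_mul, Complex.norm_real, Real.norm_of_nonneg (by positivity)]
    rw [mul_left_comm]
    refine mul_le_mul_of_nonneg_left ?_ (by positivity)
    refine (norm_sum_le _ _).trans ?_
    rw [Finset.mul_sum]
    refine Finset.sum_le_sum fun x _ => (norm_stExp_le _).trans ?_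
    rw [← stExp_mul]
    refine stExp_mono fun z _ => ?_
    rw [norm_mul, hne, one_mul, ← abs_mul]
    exact Real.norm_exp_I_mul_ofReal_sub_one_le

lemma quadChf_zero {n M : ℕ} (hn : 0 < n) (α : Fin n → ℝ) (β : ℝ) : quadChf n M α β 0 = 1 := by
  simp [quadChf, stExp_const hn]

/-- A function that nearly satisfies `ψ' = -v s ψ`, `ψ 0 = 1`, is close to a Gaussian. -/
lemma gaussian_of_ode {ψ ψ' : ℝ → ℂ} (hψ : ∀ s, HasDerivAt ψ (ψ' s) s) (h0 : ψ 0 = 1)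
    {v t ε : ℝ} (hv : 0 ≤ v) (hb : ∀ s, |s| ≤ |t| → ‖ψ' s + (v * s : ℝ) * ψ s‖ ≤ ε) :
    ‖ψ t * (Real.exp (v * t ^ 2 / 2) : ℝ) - 1‖ ≤ ε * Real.exp (v * t ^ 2 / 2) * |t| := by
  have hd : ∀ s, HasDerivAt (fun s => ψ s * ((Real.exp (v * s ^ 2 / 2) : ℝ) : ℂ))
      ((ψ' s + (v * s : ℝ) * ψ s) * ((Real.exp (v * s ^ 2 / 2) : ℝ) : ℂ)) s := by
    intro s
    have h1 : HasDerivAt (fun s : ℝ => Real.exp (v * s ^ 2 / 2))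
        (Real.exp (v * s ^ 2 / 2) * (v * s)) s := by
      have h2 : HasDerivAt (fun s : ℝ => v * s ^ 2 / 2) (v * s) s := by
        have := ((hasDerivAt_pow 2 s).const_mul v).div_const 2
        refine this.congr_deriv ?_
        norm_num; ring
      exact h2.exp
    have := (hψ s).mul h1.ofReal_comp
    refine this.congr_deriv ?_
    push_cast; ring
  have hconv : Convex ℝ (Set.Icc (-|t|) |t|) := convex_Icc _ _
  have := hconv.norm_image_sub_le_of_norm_hasDerivWithin_le
    (f := fun s => ψ s * ((Real.exp (v * s ^ 2 / 2) : ℝ) : ℂ)) (x := 0) (y := t)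
    (C := ε * Real.exp (v * t ^ 2 / 2)) (fun s _ => (hd s).hasDerivWithinAt) ?_
    (by simp) ⟨neg_abs_le t, le_abs_self t⟩
  · simpa [h0] using this
  · intro s hs
    have hs' : |s| ≤ |t| := abs_le.2 hs
    rw [norm_mul, Complex.norm_real, Real.norm_of_nonneg (Real.exp_pos _).le]
    have h3 : Real.exp (v * s ^ 2 / 2) ≤ Real.exp (v * t ^ 2 / 2) := by
      have : s ^ 2 ≤ t ^ 2 := sq_le_sq.2 hs'
      gcongr
    exact mul_le_mul (hb s hs') h3 (Real.exp_pos _).le ((norm_nonneg _).trans (hb s hs'))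

/-- Lyapunov-type bound for the third-order remainder. -/
lemma quad_third_le {n N : ℕ} (hn : 0 < n) (hN : n ≤ N) (α : Fin n → ℝ) (β : ℝ) {b : ℝ}
    (hb : ∀ x, |α x| ≤ b) :
    ((N + 1 : ℝ) / n) *
        ∑ x, stExp n N (fun z => |quadIncr n N α (β / 2) x z| * quadIncr n N α β x z ^ 2)
      ≤ 4 * b * ((N + 1 : ℝ) * ((∑ x, α x ^ 2) / n))
        + 10 * ((N + 1 : ℝ) * (|β| ^ 3 * ((N : ℝ) / n * √((N : ℝ) / n)))) := by
  have hn' : (0 : ℝ) < n := by positivity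
  set ν : ℝ := (N : ℝ) / n with hν
  have hν1 : 1 ≤ ν := by
    rw [hν, le_div_iff₀ hn', one_mul]; exact_mod_cast hN
  set r := √ν with hr
  have hr0 : 0 < r := Real.sqrt_pos.2 (by linarith)
  have hrr : r * r = ν := Real.mul_self_sqrt (by linarith)
  have hp0 : (0 : ℝ) < 1 / n := by positivity
  have hp1 : (1 / n : ℝ) ≤ 1 := by
    rw [div_le_one hn']; exact_mod_cast hn
  have hx : ∀ x, stExp n N (fun z => |quadIncr n N α (β / 2) x z| * quadIncr n N α β x z ^ 2)
      ≤ 4 * b * α x ^ 2 + 10 * (|β| ^ 3 * (ν * r)) := by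
    intro x
    obtain ⟨-, h2, -, h4, -⟩ := centralMoments hn N x _ rfl
    have hpw : ∀ z : Fin n → ℕ, |quadIncr n N α (β / 2) x z| * quadIncr n N α β x z ^ 2
        ≤ 4 * b * α x ^ 2 + (2 * |β| ^ 3 * r) * ((z x : ℝ) - N / n) ^ 2
          + (2 * |β| ^ 3 / r) * ((z x : ℝ) - N / n) ^ 4 := by
      intro z
      set g : ℝ := (z x : ℝ) - N / n with hg
      have e1 : |quadIncr n N α (β / 2) x z| ≤ |α x| + |β| * |g| := by
        unfold quadIncr
        refine (abs_add_le _ _).trans ?_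
        rw [abs_mul, abs_div, abs_two]
        nlinarith [mul_nonneg (abs_nonneg β) (abs_nonneg g)]
      have e2 : quadIncr n N α β x z ^ 2 ≤ (|α x| + |β| * |g|) ^ 2 := by
        rw [← sq_abs (quadIncr n N α β x z)]
        refine pow_le_pow_left₀ (abs_nonneg _) ?_ 2
        unfold quadIncr
        refine (abs_add_le _ _).trans ?_
        rw [abs_mul]
      set A := |α x| with hA
      set B := |β| * |g| with hB
      have hA0 : 0 ≤ A := abs_nonneg _
      have hB0 : 0 ≤ B := by positivity
      have e3 : |quadIncr n N α (β / 2) x z| * quadIncr n N α β x z ^ 2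
          ≤ (A + B) * (A + B) ^ 2 := mul_le_mul e1 e2 (sq_nonneg _) (by positivity)
      have e4 : (A + B) * (A + B) ^ 2 ≤ 4 * (A ^ 3 + B ^ 3) := by
        nlinarith [mul_nonneg (add_nonneg hA0 hB0) (sq_nonneg (A - B))]
      have e5 : A ^ 3 ≤ b * α x ^ 2 := by
        have : A ^ 3 = A * α x ^ 2 := by rw [hA, ← sq_abs (α x)]; ring
        rw [this]
        exact mul_le_mul_of_nonneg_right (hb x) (sq_nonneg _)
      have e6 : B ^ 3 ≤ |β| ^ 3 * ((r * g ^ 2 + g ^ 4 / r) / 2) := by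
        rw [hB, mul_pow]
        refine mul_le_mul_of_nonneg_left ?_ (by positivity)
        have : (r * g ^ 2 + g ^ 4 / r) / 2 - |g| ^ 3 = (r - |g|) ^ 2 * g ^ 2 / (2 * r) := by
          field_simp
          rw [← sq_abs g]
          ring
        have h' : 0 ≤ (r - |g|) ^ 2 * g ^ 2 / (2 * r) := by positivity
        linarith
      have e7 : 4 * (|β| ^ 3 * ((r * g ^ 2 + g ^ 4 / r) / 2))
          = (2 * |β| ^ 3 * r) * g ^ 2 + (2 * |β| ^ 3 / r) * g ^ 4 := by ring
      linarith
    refine (stExp_mono fun z _ => hpw z).trans ?_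
    rw [stExp_add, stExp_add, stExp_const hn, stExp_mul, stExp_mul, h2, h4]
    have hpq0 : 0 ≤ (1 / n : ℝ) * (1 - 1 / n) := mul_nonneg hp0.le (by linarith)
    have hc2 : (N : ℝ) * (1 / n * (1 - 1 / n)) ≤ ν := by
      have : (N : ℝ) * (1 / n * (1 - 1 / n)) = ν * (1 - 1 / n) := by rw [hν]; ring
      rw [this]; nlinarith
    have hc20 : 0 ≤ (N : ℝ) * (1 / n * (1 - 1 / n)) := mul_nonneg (by positivity) hpq0
    set c := (N : ℝ) * (1 / n * (1 - 1 / n)) with hc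
    have hc4 : 3 * c ^ 2 + c * (1 - 6 * (1 / n * (1 - 1 / n))) ≤ 4 * ν ^ 2 := by
      nlinarith [mul_nonneg hc20 hpq0]
    have e1 : 2 * |β| ^ 3 * r * c ≤ 2 * |β| ^ 3 * r * ν :=
      mul_le_mul_of_nonneg_left hc2 (by positivity)
    have e2 : 2 * |β| ^ 3 / r * (3 * c ^ 2 + c * (1 - 6 * (1 / n * (1 - 1 / n))))
        ≤ 2 * |β| ^ 3 / r * (4 * ν ^ 2) := mul_le_mul_of_nonneg_left hc4 (by positivity)
    have e3 : 2 * |β| ^ 3 / r * (4 * ν ^ 2) = 8 * |β| ^ 3 * (ν * r) := by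
      rw [← hrr]; field_simp; ring
    nlinarith
  calc _ ≤ ((N + 1 : ℝ) / n) * ∑ x, (4 * b * α x ^ 2 + 10 * (|β| ^ 3 * (ν * r))) :=
        mul_le_mul_of_nonneg_left (Finset.sum_le_sum fun x _ => hx x) (by positivity)
    _ = _ := by
        rw [Finset.sum_add_distrib, ← Finset.mul_sum]
        simp
        field_simp

/-- Concentration of `quadCoef` around `v₁ + v₂`: after centring, it is a combination of a linear
statistic and of the pair-count statistic, both of small variance. -/
lemma quadCoef_dev_le {n N : ℕ} (hn : 0 < n) {α : Fin n → ℝ} (hα : ∑ x, α x = 0)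
    (β v₁ v₂ : ℝ) :
    stExp n N (fun z => |quadCoef n N α β z - (v₁ + v₂)|)
      ≤ |(N + 1 : ℝ) * ((∑ x, α x ^ 2) / n) - v₁|
        + 3 / 2 * |β| * ((N + 1 : ℝ) / n) * √((N : ℝ) * ((∑ x, α x ^ 2) / n))
        + (β ^ 2 * (N + 1 : ℝ) / n / 2) * √(2 * (N : ℝ) ^ 2 / n)
        + |β ^ 2 * (N + 1 : ℝ) / n / 2 * (N * (1 - 1 / n)) - v₂| := by
  have hn' : (0 : ℝ) < n := by positivity
  have hp1 : (1 / n : ℝ) ≤ 1 := by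
    rw [div_le_one hn']; exact_mod_cast hn
  have hp0 : (0 : ℝ) < 1 / n := by positivity
  have hdec : ∀ z : Fin n → ℕ, ∑ i, z i = N → quadCoef n N α β z - (v₁ + v₂)
      = ((N + 1 : ℝ) * ((∑ x, α x ^ 2) / n) - v₁)
        + (3 / 2 * β * ((N + 1 : ℝ) / n)) * quadStat n N α 0 z
        + (β ^ 2 * (N + 1 : ℝ) / n / 2) * quadStat n N (fun _ => 0) 2 z
        + (β ^ 2 * (N + 1 : ℝ) / n / 2 * (N * (1 - 1 / n)) - v₂) := by
    intro z hz
    unfold quadCoef quadStat quadIncr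
    have h : ∀ x, (α x + β / 2 * ((z x : ℝ) - N / n)) * (α x + β * ((z x : ℝ) - N / n))
        = α x ^ 2 + 3 / 2 * β * (α x * z x) - 3 / 2 * β * (N / n) * α x
          + β ^ 2 / 2 * ((z x : ℝ) * ((z x : ℝ) - 1)) + β ^ 2 / 2 * (1 - 2 * N / n) * z x
          + β ^ 2 / 2 * (N / n) ^ 2 := by
      intro x; ring
    simp_rw [h, Finset.sum_add_distrib, Finset.sum_sub_distrib, Finset.sum_add_distrib,
      ← Finset.mul_sum, hα, sum_cast hz]
    simp
    field_simp
    ring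
  have hle : ∀ z : Fin n → ℕ, ∑ i, z i = N → |quadCoef n N α β z - (v₁ + v₂)|
      ≤ |(N + 1 : ℝ) * ((∑ x, α x ^ 2) / n) - v₁|
        + (3 / 2 * |β| * ((N + 1 : ℝ) / n)) * |quadStat n N α 0 z|
        + (β ^ 2 * (N + 1 : ℝ) / n / 2) * |quadStat n N (fun _ => 0) 2 z|
        + |β ^ 2 * (N + 1 : ℝ) / n / 2 * (N * (1 - 1 / n)) - v₂| := by
    intro z hz
    rw [hdec z hz]
    refine (abs_add_le _ _).trans (add_le_add ((abs_add_le _ _).trans (add_le_add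
      ((abs_add_le _ _).trans (add_le_add le_rfl ?_)) ?_)) le_rfl)
    · rw [abs_mul, abs_mul, abs_mul, abs_of_pos (by norm_num : (0 : ℝ) < 3 / 2),
        abs_of_nonneg (by positivity : (0 : ℝ) ≤ (N + 1 : ℝ) / n)]
    · rw [abs_mul, abs_of_nonneg (by positivity : (0 : ℝ) ≤ β ^ 2 * (N + 1 : ℝ) / n / 2)]
  refine (stExp_mono hle).trans ?_
  rw [stExp_add, stExp_add, stExp_add, stExp_const hn, stExp_const hn, stExp_mul, stExp_mul]
  have q1 := stExp_abs_le_sqrt (M := N) hn (quadStat n N α 0)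
  have q2 := stExp_abs_le_sqrt (M := N) hn (quadStat n N (fun _ => 0) 2)
  rw [stExp_quadStat_sq hn hα] at q1
  rw [stExp_quadStat_sq hn (by simp)] at q2
  have q3 : √((N : ℝ) * ((∑ x : Fin n, (fun _ => (0 : ℝ)) x ^ 2) / n)
      + 2 ^ 2 * ((N : ℝ) * (N - 1) / 2 * (1 / n * (1 - 1 / n)))) ≤ √(2 * (N : ℝ) ^ 2 / n) := by
    apply Real.sqrt_le_sqrt
    simp only [ne_eq, OfNat.ofNat_ne_zero, not_false_eq_true, zero_pow, sum_const_zero, zero_div,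
      mul_zero, zero_add]
    have h1 : (N : ℝ) * (N - 1) * (1 - 1 / n) ≤ (N : ℝ) ^ 2 := by
      rcases Nat.eq_zero_or_pos N with h | h
      · subst h; simp
      · have : (1 : ℝ) ≤ N := by exact_mod_cast h
        nlinarith [mul_nonneg (by linarith : (0 : ℝ) ≤ N) (by linarith : (0 : ℝ) ≤ (N : ℝ) - 1)]
    have h2 : (2 : ℝ) ^ 2 * ((N : ℝ) * (N - 1) / 2 * (1 / n * (1 - 1 / n)))
        = 2 * ((N : ℝ) * (N - 1) * (1 - 1 / n)) / n := by ring
    rw [h2]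
    gcongr
  simp only [ne_eq, OfNat.ofNat_ne_zero, not_false_eq_true, zero_pow, zero_mul, add_zero] at q1
  refine add_le_add (add_le_add (add_le_add le_rfl ?_) ?_) le_rfl
  · exact mul_le_mul_of_nonneg_left q1 (by positivity)
  · exact mul_le_mul_of_nonneg_left (q2.trans q3) (by positivity)

/-- First absolute moment of the increments, averaged over the bins. By the inequality
`|x| ≤ η / 2 + x² / (2 η)`, the parameter `η` being free. -/
lemma quadIncr_abs_le {n N : ℕ} (hn : 0 < n) (α : Fin n → ℝ) (β : ℝ) {η : ℝ} (hη : 0 < η) :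
    (1 / n : ℝ) * ∑ x, stExp n N (fun z => |quadIncr n N α β x z|)
      ≤ η / 2 + ((∑ x, α x ^ 2) / n + β ^ 2 * (N / n)) / (2 * η) := by
  have hn' : (0 : ℝ) < n := by positivity
  have h : ∀ x, stExp n N (fun z => |quadIncr n N α β x z|)
      ≤ η / 2 + 1 / (2 * η) * stExp n N (fun z => quadIncr n N α β x z ^ 2) := by
    intro x
    have hG : stExp n N (fun z => η / 2 + 1 / (2 * η) * quadIncr n N α β x z ^ 2)
        = η / 2 + 1 / (2 * η) * stExp n N (fun z => quadIncr n N α β x z ^ 2) := by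
      rw [stExp_add, stExp_const hn, stExp_mul]
    rw [← hG]
    refine stExp_mono fun z _ => ?_
    set d := quadIncr n N α β x z
    have : η / 2 + 1 / (2 * η) * d ^ 2 - |d| = (η - |d|) ^ 2 / (2 * η) := by
      field_simp
      rw [← sq_abs d]; ring
    have h' : 0 ≤ (η - |d|) ^ 2 / (2 * η) := by positivity
    linarith
  calc _ ≤ (1 / n : ℝ) * ∑ x, (η / 2
          + 1 / (2 * η) * stExp n N (fun z => quadIncr n N α β x z ^ 2)) :=
        mul_le_mul_of_nonneg_left (Finset.sum_le_sum fun x _ => h x) (by positivity)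
    _ = η / 2 + 1 / (2 * η) *
          ((1 / n : ℝ) * ∑ x, stExp n N (fun z => quadIncr n N α β x z ^ 2)) := by
        rw [Finset.sum_add_distrib, ← Finset.mul_sum]
        simp
        field_simp
    _ ≤ _ := by
        rw [stExp_sum_quadIncr_sq hn, one_div_mul_eq_div]
        have : (N : ℝ) * (1 / n * (1 - 1 / n)) ≤ N / n := by
          have h1 : (N : ℝ) * (1 / n * (1 - 1 / n)) = N / n - N / n * (1 / n) := by ring
          have h2 : (0 : ℝ) ≤ N / n * (1 / n) := by positivity
          linarith
        gcongr

/-- Non-asymptotic form of the central limit theorem for `quadStat` with `M = N + 1` balls, in terms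
of the variance `X = M (∑ α²) / n` of the linear part and the size `R = |β| M / √n` of the quadratic
part. -/
lemma quadChf_near {n N : ℕ} (hn : 0 < n) (hN : n ≤ N) {α : Fin n → ℝ} (hα : ∑ x, α x = 0)
    {β b v₁ v₂ X R : ℝ} (hb : ∀ x, |α x| ≤ b) (hv₁ : 0 ≤ v₁) (hv₂ : 0 ≤ v₂)
    (hX : X = ((N + 1 : ℕ) : ℝ) * ((∑ x, α x ^ 2) / n))
    (hR : R = |β| * ((N + 1 : ℕ) : ℝ) / √n) (t : ℝ) :
    ‖quadChf n (N + 1) α β t * (Real.exp ((v₁ + v₂) * t ^ 2 / 2) : ℝ) - 1‖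
      ≤ (2 * t ^ 2 * (4 * b * X + 10 * (R ^ 3 / √((N + 1 : ℕ) : ℝ)))
        + |t| * (|X - v₁| + 3 / 2 * (R * √X / √n) + R ^ 2 / √n
          + |R ^ 2 / 2 * ((1 - 1 / ((N + 1 : ℕ) : ℝ)) * (1 - 1 / n)) - v₂|)
        + |(v₁ + v₂) * t| * (|t| * ((1 + X + R ^ 2) / √((N + 1 : ℕ) : ℝ))))
        * Real.exp ((v₁ + v₂) * t ^ 2 / 2) * |t| := by
  refine gaussian_of_ode (fun s => hasDerivAt_quadChf n (N + 1) α β s) (quadChf_zero hn α β)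
    (by positivity) fun s hs => (quadChf_ode hn hα β (v₁ + v₂) s).trans ?_
  have hn' : (0 : ℝ) < n := by positivity
  set S : ℝ := (∑ x, α x ^ 2) / n with hS
  have hS0 : 0 ≤ S := div_nonneg (Finset.sum_nonneg fun _ _ => sq_nonneg _) hn'.le
  have hN1 : (0 : ℝ) < (N : ℝ) + 1 := by positivity
  push_cast at hX hR ⊢
  have hX0 : 0 ≤ X := by rw [hX]; positivity
  have hsn : 0 < √(n : ℝ) := Real.sqrt_pos.2 hn'
  have hsn2 : √(n : ℝ) * √n = n := Real.mul_self_sqrt hn'.le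
  have hsm : 0 < √((N : ℝ) + 1) := Real.sqrt_pos.2 hN1
  have hsm2 : √((N : ℝ) + 1) * √((N : ℝ) + 1) = (N : ℝ) + 1 := Real.mul_self_sqrt hN1.le
  have hR0 : 0 ≤ R := by rw [hR]; positivity
  have hR2 : R ^ 2 = β ^ 2 * ((N : ℝ) + 1) ^ 2 / n := by
    rw [hR, div_pow, mul_pow, sq_abs, sq (√(n : ℝ)), hsn2]
  have q1 := quad_third_le hn hN α β hb
  have q2 := quadCoef_dev_le (N := N) hn hα β v₁ v₂
  have q3 := quadIncr_abs_le (N := N) hn α β (η := 1 / √((N : ℝ) + 1)) (by positivity)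
  rw [← hS] at q1 q2 q3
  rw [← hX] at q1 q2
  have r1 : ((N : ℝ) + 1) * (|β| ^ 3 * ((N : ℝ) / n * √((N : ℝ) / n))) ≤ R ^ 3 / √((N : ℝ) + 1) := by
    have hle : (N : ℝ) / n ≤ ((N : ℝ) + 1) / n := by gcongr; linarith
    calc _ ≤ ((N : ℝ) + 1) * (|β| ^ 3 * (((N : ℝ) + 1) / n * √(((N : ℝ) + 1) / n))) := by
          gcongr
      _ = _ := by
          rw [Real.sqrt_div hN1.le, hR]
          set r := √((N : ℝ) + 1)
          set q := √(n : ℝ)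
          rw [← hsm2, ← hsn2]
          field_simp
  have r2 : |β| * (((N : ℝ) + 1) / n) * √((N : ℝ) * S) ≤ R * √X / √n := by
    have h1 : √((N : ℝ) * S) ≤ √X := by
      apply Real.sqrt_le_sqrt; rw [hX]; gcongr; linarith
    calc _ ≤ |β| * (((N : ℝ) + 1) / n) * √X := by gcongr
      _ = _ := by
          rw [hR]
          set q := √(n : ℝ)
          rw [← hsn2]; field_simp
  have r3 : (β ^ 2 * ((N : ℝ) + 1) / n / 2) * √(2 * (N : ℝ) ^ 2 / n) ≤ R ^ 2 / √n := by
    have h1 : √(2 * (N : ℝ) ^ 2 / n) ≤ 2 * (N + 1) / √n := by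
      rw [Real.sqrt_le_left (by positivity), div_pow, sq (√(n : ℝ)), hsn2]
      gcongr
      nlinarith [(Nat.cast_nonneg N : (0 : ℝ) ≤ N)]
    calc _ ≤ (β ^ 2 * ((N : ℝ) + 1) / n / 2) * (2 * (N + 1) / √n) := by gcongr
      _ = _ := by rw [hR2]; field_simp
  have r4 : β ^ 2 * ((N : ℝ) + 1) / n / 2 * (N * (1 - 1 / n))
      = R ^ 2 / 2 * ((1 - 1 / ((N : ℝ) + 1)) * (1 - 1 / n)) := by
    rw [hR2]; field_simp; ring
  have r5 : 1 / √((N : ℝ) + 1) / 2 + (S + β ^ 2 * (N / n)) / (2 * (1 / √((N : ℝ) + 1)))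
      ≤ (1 + X + R ^ 2) / √((N : ℝ) + 1) := by
    have h1 : β ^ 2 * ((N : ℝ) / n) ≤ β ^ 2 * (((N : ℝ) + 1) / n) := by gcongr; linarith
    have h2 : (S + β ^ 2 * (((N : ℝ) + 1) / n)) / (2 * (1 / √((N : ℝ) + 1)))
        = (X + R ^ 2) / √((N : ℝ) + 1) / 2 := by
      rw [hX, hR2]
      set r := √((N : ℝ) + 1)
      rw [← hsm2]; field_simp
    have h3 : (S + β ^ 2 * ((N : ℝ) / n)) / (2 * (1 / √((N : ℝ) + 1)))
        ≤ (S + β ^ 2 * (((N : ℝ) + 1) / n)) / (2 * (1 / √((N : ℝ) + 1))) := by gcongr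
    have h4 : 0 ≤ (X + R ^ 2) / √((N : ℝ) + 1) := by positivity
    have h5 : 0 ≤ 1 / √((N : ℝ) + 1) := by positivity
    have h6 : (1 + X + R ^ 2) / √((N : ℝ) + 1) = 1 / √((N : ℝ) + 1) + (X + R ^ 2) / √((N : ℝ) + 1) := by
      ring
    rw [h6]; linarith
  rw [r4] at q2
  have hs2 : s ^ 2 ≤ t ^ 2 := sq_le_sq.2 hs
  have f1 := q1.trans (add_le_add le_rfl (mul_le_mul_of_nonneg_left r1 (by norm_num : (0 : ℝ) ≤ 10)))
  have f2 : stExp n N (fun z => |quadCoef n N α β z - (v₁ + v₂)|) ≤ |X - v₁| + 3 / 2 * (R * √X / √n)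
      + R ^ 2 / √n + |R ^ 2 / 2 * ((1 - 1 / ((N : ℝ) + 1)) * (1 - 1 / n)) - v₂| := by
    linarith
  have f3 := q3.trans r5
  have g1 : 0 ≤ ((N + 1 : ℝ) / n) *
      ∑ x, stExp n N (fun z => |quadIncr n N α (β / 2) x z| * quadIncr n N α β x z ^ 2) :=
    mul_nonneg (by positivity) (Finset.sum_nonneg fun x _ => stExp_nonneg fun z _ => by positivity)
  have g2 : 0 ≤ stExp n N (fun z => |quadCoef n N α β z - (v₁ + v₂)|) :=
    stExp_nonneg fun z _ => abs_nonneg _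
  have g3 : 0 ≤ (1 / n : ℝ) * ∑ x, stExp n N (fun z => |quadIncr n N α β x z|) :=
    mul_nonneg (by positivity) (Finset.sum_nonneg fun x _ => stExp_nonneg fun z _ => abs_nonneg _)
  have hvs : |(v₁ + v₂) * s| ≤ |(v₁ + v₂) * t| := by
    rw [abs_mul, abs_mul]; gcongr
  refine add_le_add (add_le_add ?_ ?_) ?_
  · exact mul_le_mul (by linarith) f1 g1 (by positivity)
  · exact mul_le_mul hs f2 g2 (abs_nonneg _)
  · exact mul_le_mul hvs (mul_le_mul hs f3 g3 (abs_nonneg _)) (mul_nonneg (abs_nonneg _) g3)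
      (abs_nonneg _)

/-- Central limit theorem for `quadStat`: the linear part contributes the variance `v₁`, the
quadratic part `R₀² / 2`. -/
lemma tendsto_quadChf {m : ℕ → ℕ} {α : (n : ℕ) → Fin n → ℝ} {β b : ℕ → ℝ} {v₁ R₀ : ℝ}
    (hv₁ : 0 ≤ v₁)
    (hα : ∀ᶠ n in atTop, ∑ x, α n x = 0) (hb : ∀ᶠ n in atTop, ∀ x, |α n x| ≤ b n)
    (hb0 : Tendsto b atTop (𝓝 0)) (hm : Tendsto (fun n => (m n : ℝ) / n) atTop atTop)
    (h₁ : Tendsto (fun n => (m n : ℝ) * ((∑ x, α n x ^ 2) / n)) atTop (𝓝 v₁))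
    (h₂ : Tendsto (fun n => |β n| * (m n : ℝ) / √n) atTop (𝓝 R₀)) (t : ℝ) :
    Tendsto (fun n => quadChf n (m n) (α n) (β n) t) atTop
      (𝓝 (Real.exp (-((v₁ + R₀ ^ 2 / 2) * t ^ 2 / 2)) : ℝ)) := by
  set X := fun n => (m n : ℝ) * ((∑ x, α n x ^ 2) / n)
  set R := fun n => |β n| * (m n : ℝ) / √n
  have hnat : Tendsto (fun n : ℕ => (n : ℝ)) atTop atTop := tendsto_natCast_atTop_atTop
  have hsn : Tendsto (fun n : ℕ => √(n : ℝ)) atTop atTop := Real.tendsto_sqrt_atTop.comp hnat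
  have hmm : Tendsto (fun n : ℕ => (m n : ℝ)) atTop atTop := by
    refine tendsto_atTop_mono' _ ?_ hm
    filter_upwards [eventually_ge_atTop 1] with n hn
    exact div_le_self (by positivity) (by exact_mod_cast hn)
  have hsm : Tendsto (fun n : ℕ => √(m n : ℝ)) atTop atTop := Real.tendsto_sqrt_atTop.comp hmm
  have h1m : Tendsto (fun n : ℕ => 1 / (m n : ℝ)) atTop (𝓝 0) := by
    exact tendsto_const_nhds.div_atTop hmm
  have h1n : Tendsto (fun n : ℕ => 1 / (n : ℝ)) atTop (𝓝 0) := by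
    exact tendsto_const_nhds.div_atTop hnat
  set v₂ := R₀ ^ 2 / 2 with hv₂
  set E := fun n => (2 * t ^ 2 * (4 * b n * X n + 10 * (R n ^ 3 / √(m n : ℝ)))
        + |t| * (|X n - v₁| + 3 / 2 * (R n * √(X n) / √n) + R n ^ 2 / √n
          + |R n ^ 2 / 2 * ((1 - 1 / (m n : ℝ)) * (1 - 1 / n)) - v₂|)
        + |(v₁ + v₂) * t| * (|t| * ((1 + X n + R n ^ 2) / √(m n : ℝ))))
        * Real.exp ((v₁ + v₂) * t ^ 2 / 2) * |t|
  have hE : Tendsto E atTop (𝓝 0) := by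
    have a1 := ((hb0.const_mul 4).mul h₁).add (((h₂.pow 3).div_atTop hsm).const_mul 10)
    have a2 := ((((h₁.sub_const v₁).abs).add
      (((h₂.mul h₁.sqrt).div_atTop hsn).const_mul (3 / 2))).add ((h₂.pow 2).div_atTop hsn)).add
      (((((h₂.pow 2).div_const 2).mul ((h1m.const_sub 1).mul (h1n.const_sub 1))).sub_const v₂).abs)
    have a3 := (((h₁.const_add 1).add (h₂.pow 2)).div_atTop hsm)
    have a4 := ((((a1.const_mul (2 * t ^ 2)).add (a2.const_mul |t|)).add
      ((a3.const_mul |t|).const_mul |(v₁ + v₂) * t|)).mul_const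
        (Real.exp ((v₁ + v₂) * t ^ 2 / 2))).mul_const |t|
    refine (a4.congr fun n => rfl).trans_eq ?_
    simp [hv₂]
  have hle : ∀ᶠ n in atTop, ‖quadChf n (m n) (α n) (β n) t
      * (Real.exp ((v₁ + v₂) * t ^ 2 / 2) : ℝ) - 1‖ ≤ E n := by
    filter_upwards [hα, hb, hm.eventually_ge_atTop 2, eventually_ge_atTop 1] with n h1 h2 h3 hn
    have hn' : (0 : ℝ) < n := by exact_mod_cast hn
    rw [le_div_iff₀ hn'] at h3
    have h4 : 2 * n ≤ m n := by exact_mod_cast h3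
    obtain ⟨N, hN⟩ : ∃ N, m n = N + 1 := ⟨m n - 1, by omega⟩
    have := quadChf_near (N := N) hn (by omega) h1 (b := b n) (β := β n) (v₁ := v₁) (v₂ := v₂) h2 hv₁
      (by positivity) rfl rfl t
    simp only [E, X, R, hN]
    exact this
  have h0 : Tendsto (fun n => quadChf n (m n) (α n) (β n) t
      * (Real.exp ((v₁ + v₂) * t ^ 2 / 2) : ℝ) - 1) atTop (𝓝 0) :=
    squeeze_zero_norm' hle hE
  have h1 := (h0.add_const 1).mul_const ((Real.exp (-((v₁ + v₂) * t ^ 2 / 2)) : ℝ) : ℂ)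
  simp only [sub_add_cancel, zero_add, one_mul, mul_assoc] at h1
  refine h1.congr fun n => ?_
  rw [← Complex.ofReal_mul, ← Real.exp_add]; simp

/-! ### From characteristic functions to weak convergence -/

/-- The law of a statistic `T` under ST(M,n), as a finite combination of Dirac masses. -/
noncomputable def stLaw (n M : ℕ) (T : (Fin n → ℕ) → ℝ) : MeasureTheory.Measure ℝ :=
  ∑ z ∈ piAntidiag univ M, ENNReal.ofReal (stProb n M z) • MeasureTheory.Measure.dirac (T z)

lemma integral_stLaw {E : Type*} [NormedAddCommGroup E] [NormedSpace ℝ E] [CompleteSpace E]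
    (n M : ℕ) (T : (Fin n → ℕ) → ℝ) (f : ℝ → E) :
    ∫ x, f x ∂(stLaw n M T) = stExp n M (fun z => f (T z)) := by
  unfold stLaw stExp
  rw [MeasureTheory.integral_finsetSum_measure]
  · refine Finset.sum_congr rfl fun z _ => ?_
    rw [MeasureTheory.integral_smul_measure, MeasureTheory.integral_dirac,
      ENNReal.toReal_ofReal (stProb_nonneg _ _ _)]
  · intro z _
    refine MeasureTheory.Integrable.smul_measure ?_ ENNReal.ofReal_ne_top
    exact MeasureTheory.integrable_dirac (by simp)

lemma stLaw_prob {n : ℕ} (hn : 0 < n) (M : ℕ) (T : (Fin n → ℕ) → ℝ) :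
    MeasureTheory.IsProbabilityMeasure (stLaw n M T) := by
  constructor
  unfold stLaw
  rw [MeasureTheory.Measure.finsetSum_apply]
  simp only [MeasureTheory.Measure.smul_apply, MeasureTheory.measure_univ, smul_eq_mul, mul_one]
  rw [← ENNReal.ofReal_sum_of_nonneg fun z _ => stProb_nonneg _ _ _]
  have := stExp_const hn M (1 : ℝ)
  simp only [stExp, smul_eq_mul, mul_one] at this
  rw [this]; simp

/-- Convergence of characteristic functions to a Gaussian one gives convergence of expectations of
bounded continuous functions. -/
lemma tendsto_stExp_of_chf {m : ℕ → ℕ} {T : (n : ℕ) → (Fin n → ℕ) → ℝ} {v : ℝ} (hv : 0 ≤ v)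
    (h : ∀ t : ℝ, Tendsto (fun n => stExp n (m n)
      (fun z => Complex.exp (Complex.I * ((t * T n z : ℝ) : ℂ)))) atTop
      (𝓝 (Real.exp (-(v * t ^ 2 / 2)) : ℝ))) (f : BoundedContinuousFunction ℝ ℝ) :
    Tendsto (fun n => stExp n (m n) (fun z => f (T n z))) atTop
      (𝓝 (∫ x, f x ∂(ProbabilityTheory.gaussianReal 0 v.toNNReal))) := by
  rw [← tendsto_add_atTop_iff_nat 1]
  let μ : ℕ → MeasureTheory.ProbabilityMeasure ℝ := fun n =>
    ⟨stLaw (n + 1) (m (n + 1)) (T (n + 1)), stLaw_prob (Nat.succ_pos n) _ _⟩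
  let γ : MeasureTheory.ProbabilityMeasure ℝ :=
    ⟨ProbabilityTheory.gaussianReal 0 v.toNNReal, inferInstance⟩
  have hμ : Tendsto μ atTop (𝓝 γ) := by
    rw [MeasureTheory.ProbabilityMeasure.tendsto_iff_tendsto_charFun]
    intro t
    have h1 := (tendsto_add_atTop_iff_nat 1).2 (h t)
    have h2 : MeasureTheory.charFun (γ : MeasureTheory.Measure ℝ) t
        = ((Real.exp (-(v * t ^ 2 / 2)) : ℝ) : ℂ) := by
      change MeasureTheory.charFun (ProbabilityTheory.gaussianReal 0 v.toNNReal) t = _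
      rw [ProbabilityTheory.charFun_gaussianReal]
      push_cast
      rw [show ((v.toNNReal : ℝ) : ℂ) = (v : ℂ) by rw [Real.coe_toNNReal v hv]]
      congr 1; simp
    rw [h2]
    refine h1.congr fun n => ?_
    change _ = MeasureTheory.charFun (stLaw (n + 1) (m (n + 1)) (T (n + 1))) t
    rw [MeasureTheory.charFun_apply_real, integral_stLaw]
    refine stExp_congr fun z _ => ?_
    push_cast
    congr 1; ring
  rw [MeasureTheory.ProbabilityMeasure.tendsto_iff_forall_integral_tendsto] at hμ
  refine (hμ f).congr fun n => ?_
  exact integral_stLaw _ _ _ _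

/-! ### The likelihood ratio -/

/-- The likelihood ratio of PL_A(m,n) with respect to ST(m,n). -/
noncomputable def likRatio (n m : ℕ) (a z : Fin n → ℕ) : ℝ := plProb n m a z / stProb n m z

lemma plProb_nonneg (n m : ℕ) (a z : Fin n → ℕ) : 0 ≤ plProb n m a z := by
  unfold plProb
  split_ifs <;> positivity

lemma likRatio_nonneg (n m : ℕ) (a z : Fin n → ℕ) : 0 ≤ likRatio n m a z :=
  div_nonneg (plProb_nonneg _ _ _ _) (stProb_nonneg _ _ _)

lemma plProb_add (n M : ℕ) (a y : Fin n → ℕ) (hy : ∑ i, y i = M) :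
    plProb n (M + ∑ i, a i) a (y + a) = stProb n M y := by
  unfold plProb stProb
  rw [if_pos, if_pos hy]
  · simp
  · refine ⟨?_, fun i => by simp⟩
    simp [Finset.sum_add_distrib, hy]

/-- Expectations under the planted distribution are expectations over the `M` unplanted balls. -/
lemma stExp_likRatio_mul {n M m : ℕ} (hn : 0 < n) (a : Fin n → ℕ) (hm : m = M + ∑ i, a i)
    (F : (Fin n → ℕ) → ℝ) :
    stExp n m (fun z => likRatio n m a z * F z) = stExp n M (fun y => F (y + a)) := by
  unfold stExp
  symm
  refine Finset.sum_of_injOn (fun y => y + a) (fun y _ y' _ h => add_right_cancel h) ?_ ?_ ?_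
  · intro y hy
    rw [Finset.mem_coe, mem_confs] at hy ⊢
    simp [Finset.sum_add_distrib, hy, hm]
  · intro z hz hz'
    rw [mem_confs] at hz
    have : plProb n m a z = 0 := by
      unfold plProb
      rw [if_neg]
      rintro ⟨-, h⟩
      apply hz'
      refine ⟨z - a, ?_, ?_⟩
      · rw [Finset.mem_coe, mem_confs]
        have : ∑ i, (z - a) i + ∑ i, a i = ∑ i, z i := by
          rw [← Finset.sum_add_distrib]
          exact Finset.sum_congr rfl fun i _ => Nat.sub_add_cancel (h i)
        omega
      · funext i; exact Nat.sub_add_cancel (h i)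
    simp [likRatio, this]
  · intro y hy
    rw [mem_confs] at hy
    have hz : ∑ i, (y + a) i = m := by simp [Finset.sum_add_distrib, hy, hm]
    have := (stProb_pos hn hz).ne'
    have h2 := plProb_add n M a y hy
    rw [← hm] at h2
    simp only [likRatio, h2, smul_eq_mul]
    field_simp

lemma stExp_likRatio {n M m : ℕ} (hn : 0 < n) (a : Fin n → ℕ) (hm : m = M + ∑ i, a i) :
    stExp n m (likRatio n m a) = 1 := by
  have := stExp_likRatio_mul hn a hm (fun _ => 1)
  simpa [stExp_const hn] using this

/-- The total variation distance is `E (1 - L)⁺` under the standard distribution, where `L` is the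
likelihood ratio. -/
lemma tvDist_eq {n M m : ℕ} (hn : 0 < n) (a : Fin n → ℕ) (hm : m = M + ∑ i, a i) :
    tvDist n m a = stExp n m (fun z => max 0 (1 - likRatio n m a z)) := by
  unfold tvDist
  rw [tsum_eq_sum (s := piAntidiag univ m)]
  · have h1 : stExp n m (fun z => max 0 (1 - likRatio n m a z))
        = stExp n m (fun z => 1 / 2 * |1 - likRatio n m a z| + 1 / 2 * (1 - likRatio n m a z)) := by
      refine stExp_congr fun z _ => ?_
      rcases le_total 0 (1 - likRatio n m a z) with h | h
      · rw [max_eq_right h, abs_of_nonneg h]; ring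
      · rw [max_eq_left h, abs_of_nonpos h]; ring
    rw [h1, stExp_add, stExp_mul, stExp_mul, stExp_sub, stExp_const hn, stExp_likRatio hn a hm]
    simp only [sub_self, mul_zero, add_zero]
    congr 1
    refine Finset.sum_congr rfl fun z hz => ?_
    have := stProb_pos hn (mem_confs.1 hz)
    rw [smul_eq_mul, ← abs_of_pos this, ← abs_mul, abs_of_pos this, likRatio]
    congr 1
    field_simp
  · intro z hz
    rw [mem_confs] at hz
    simp [stProb, plProb, hz]

lemma likRatio_add_pos {n M m : ℕ} (hn : 0 < n) (a : Fin n → ℕ) (hm : m = M + ∑ i, a i)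
    {y : Fin n → ℕ} (hy : ∑ i, y i = M) : 0 < likRatio n m a (y + a) := by
  have hz : ∑ i, (y + a) i = m := by simp [Finset.sum_add_distrib, hy, hm]
  have h2 := plProb_add n M a y hy
  rw [← hm] at h2
  rw [likRatio, h2]
  exact div_pos (stProb_pos hn hy) (stProb_pos hn hz)

lemma log_likRatio_add {n M m : ℕ} (hn : 0 < n) (a : Fin n → ℕ) (hm : m = M + ∑ i, a i)
    {y : Fin n → ℕ} (hy : ∑ i, y i = M) :
    Real.log (likRatio n m a (y + a))
      = ∑ i, ∑ u ∈ range (a i), Real.log ((y i : ℝ) + (u + 1))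
        - ∑ s ∈ range (∑ i, a i), Real.log (((M : ℝ) + (s + 1)) / n) := by
  have hz : ∑ i, (y + a) i = m := by simp [Finset.sum_add_distrib, hy, hm]
  have h2 := plProb_add n M a y hy
  rw [← hm] at h2
  have hn' : (0 : ℝ) < n := by positivity
  have hasc : ∀ N b : ℕ, (Nat.factorial (N + b) : ℝ)
      = Nat.factorial N * ∏ u ∈ range b, ((N : ℝ) + (u + 1)) := by
    intro N b
    rw [← Nat.factorial_mul_ascFactorial, Nat.ascFactorial_eq_prod_range]
    push_cast
    congr 1
    exact Finset.prod_congr rfl fun u _ => by ring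
  have hL : likRatio n m a (y + a) = (∏ i, ∏ u ∈ range (a i), ((y i : ℝ) + (u + 1)))
      / ∏ s ∈ range (∑ i, a i), (((M : ℝ) + (s + 1)) / n) := by
    rw [likRatio, h2, stProb, stProb, if_pos hy, if_pos hz]
    simp only [Pi.add_apply, hasc, hm, Finset.prod_mul_distrib, Finset.prod_div_distrib,
      Finset.prod_const, Finset.card_range]
    have e1 : (∏ i, (Nat.factorial (y i) : ℝ)) ≠ 0 :=
      Finset.prod_ne_zero_iff.2 fun i _ => by positivity
    have e2 : (∏ i, ∏ u ∈ range (a i), ((y i : ℝ) + (u + 1))) ≠ 0 :=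
      Finset.prod_ne_zero_iff.2 fun i _ => Finset.prod_ne_zero_iff.2 fun u _ => by positivity
    have e3 : (∏ u ∈ range (∑ i, a i), ((M : ℝ) + (u + 1))) ≠ 0 :=
      Finset.prod_ne_zero_iff.2 fun u _ => by positivity
    have e4 : (Nat.factorial M : ℝ) ≠ 0 := by positivity
    rw [pow_add]
    field_simp
    rw [← mul_pow, one_div_mul_cancel hn'.ne', one_pow]
  rw [hL, Real.log_div, Real.log_prod, Real.log_prod]
  · congr 1
    refine Finset.sum_congr rfl fun i _ => ?_
    rw [Real.log_prod]
    intro u _; positivity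
  · intro s _; positivity
  · exact fun i _ => Finset.prod_ne_zero_iff.2 fun u _ => by positivity
  · exact Finset.prod_ne_zero_iff.2 fun i _ => Finset.prod_ne_zero_iff.2 fun u _ => by positivity
  · exact Finset.prod_ne_zero_iff.2 fun s _ => by positivity

/-- Under the planted distribution `quadStat` is again a quadratic statistic of the unplanted
balls, plus a constant. -/
lemma quadStat_add {n M m : ℕ} (hn : 0 < n) (a : Fin n → ℕ) (hm : m = M + ∑ i, a i)
    (α : Fin n → ℝ) (β : ℝ) {y : Fin n → ℕ} (hy : ∑ i, y i = M) :
    quadStat n m α β (y + a)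
      = (∑ i, α i * a i + β / 2 * (∑ i, (a i : ℝ) ^ 2 - (∑ i, (a i : ℝ)) ^ 2 / n
            - (∑ i, (a i : ℝ)) * (1 - 1 / n)))
        + quadStat n M (fun i => α i + β * ((a i : ℝ) - (∑ j, (a j : ℝ)) / n)) β y := by
  have hn' : (n : ℝ) ≠ 0 := by positivity
  subst hm
  unfold quadStat
  set k : ℝ := ∑ j, (a j : ℝ)
  have h1 : ∀ i, (((y + a) i : ℕ) : ℝ) * ((((y + a) i : ℕ) : ℝ) - 1)
      = (y i : ℝ) * ((y i : ℝ) - 1) + 2 * ((a i : ℝ) * y i) + ((a i : ℝ) ^ 2 - a i) := by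
    intro i; simp; ring
  have h2 : ∀ i, α i * (((y + a) i : ℕ) : ℝ) = α i * y i + α i * a i := by
    intro i; simp; ring
  have h3 : ∀ i, (α i + β * ((a i : ℝ) - k / n)) * (y i : ℝ)
      = α i * y i + β * ((a i : ℝ) * y i) - β * (k / n) * y i := by
    intro i; ring
  simp_rw [h1, h2, h3, Finset.sum_add_distrib, Finset.sum_sub_distrib, Finset.sum_add_distrib,
    ← Finset.mul_sum, sum_cast hy]
  have hk : (((M + ∑ i, a i : ℕ) : ℕ) : ℝ) = M + k := by push_cast; rfl
  rw [hk]
  field_simp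
  ring

/-! ### Upper bound for the relative entropy -/

/-- A function whose derivative changes sign from `-` to `+` at `c` attains its minimum at `c`. -/
lemma le_of_deriv_sign {s : Set ℝ} (hs : Convex ℝ s) {f f' : ℝ → ℝ} {c : ℝ} (hc : c ∈ s)
    (hf : ∀ x ∈ s, HasDerivAt f (f' x) x) (h1 : ∀ x ∈ s, c ≤ x → 0 ≤ f' x)
    (h2 : ∀ x ∈ s, x ≤ c → f' x ≤ 0) {x : ℝ} (hx : x ∈ s) : f c ≤ f x := by
  rcases le_total c x with h | h
  · have hsub : Set.Icc c x ⊆ s := hs.ordConnected.out hc hx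
    refine monotoneOn_of_deriv_nonneg (convex_Icc c x)
      (fun y hy => (hf y (hsub hy)).continuousAt.continuousWithinAt)
      (fun y hy => (hf y (hsub (interior_subset hy))).differentiableAt.differentiableWithinAt)
      (fun y hy => ?_) (Set.left_mem_Icc.2 h) (Set.right_mem_Icc.2 h) h
    rw [(hf y (hsub (interior_subset hy))).deriv]
    exact h1 y (hsub (interior_subset hy)) (interior_subset hy).1
  · have hsub : Set.Icc x c ⊆ s := hs.ordConnected.out hx hc
    refine antitoneOn_of_deriv_nonpos (convex_Icc x c)
      (fun y hy => (hf y (hsub hy)).continuousAt.continuousWithinAt)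
      (fun y hy => (hf y (hsub (interior_subset hy))).differentiableAt.differentiableWithinAt)
      (fun y hy => ?_) (Set.left_mem_Icc.2 h) (Set.right_mem_Icc.2 h) h
    rw [(hf y (hsub (interior_subset hy))).deriv]
    exact h2 y (hsub (interior_subset hy)) (interior_subset hy).2

/-- Odd-order Taylor polynomials of `log (1 + x)` at `0` are upper bounds on the whole domain. The
fourth-order term is needed later at its exact leading size, hence order five. -/
lemma log_one_add_le_quintic {x : ℝ} (hx : -1 < x) :
    Real.log (1 + x) ≤ x - x ^ 2 / 2 + x ^ 3 / 3 - x ^ 4 / 4 + x ^ 5 / 5 := by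
  have key := le_of_deriv_sign (s := Set.Ioi (-1)) (convex_Ioi _)
    (f := fun x => x - x ^ 2 / 2 + x ^ 3 / 3 - x ^ 4 / 4 + x ^ 5 / 5 - Real.log (1 + x))
    (f' := fun x => x ^ 5 / (1 + x)) (c := 0) (by simp) ?_ ?_ ?_ (x := x) hx
  · simp only [ne_eq, OfNat.ofNat_ne_zero, not_false_eq_true, zero_pow, zero_div, add_zero,
      sub_zero, Real.log_one] at key
    linarith
  · intro y hy
    have hy' : 0 < 1 + y := by have : -1 < y := hy; linarith
    have h1 : HasDerivAt (fun x : ℝ => Real.log (1 + x)) (1 / (1 + y)) y :=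
      ((hasDerivAt_id y).const_add 1).log hy'.ne'
    have h2 := (((((hasDerivAt_id' y).sub ((hasDerivAt_pow 2 y).div_const 2)).add
      ((hasDerivAt_pow 3 y).div_const 3)).sub ((hasDerivAt_pow 4 y).div_const 4)).add
      ((hasDerivAt_pow 5 y).div_const 5)).sub h1
    refine h2.congr_deriv ?_
    push_cast
    field_simp
    ring
  · intro y hy h0
    have : 0 < 1 + y := by linarith
    positivity
  · intro y hy h0
    have hy' : 0 < 1 + y := by have : -1 < y := hy; linarith
    refine div_nonpos_of_nonpos_of_nonneg ?_ hy'.le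
    exact (Odd.pow_nonpos_iff (by decide)).2 h0

/-- A primitive of the logarithm. -/
noncomputable def logPrim (v : ℝ) : ℝ := v * Real.log v - v

/-- Second-order Taylor bound for `logPrim`, whose second derivative is at most `1 / ν` on
`[ν, ∞)`. -/
lemma logPrim_le {ν b c : ℝ} (hν : 0 < ν) (hb : ν ≤ b) (hc : ν ≤ c) :
    logPrim b ≤ logPrim c + Real.log c * (b - c) + (b - c) ^ 2 / (2 * ν) := by
  have key := le_of_deriv_sign (s := Set.Ici ν) (convex_Ici _)
    (f := fun x => logPrim c + Real.log c * (x - c) + (x - c) ^ 2 / (2 * ν) - logPrim x)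
    (f' := fun x => Real.log c + (x - c) / ν - Real.log x) (c := c) hc ?_ ?_ ?_ (x := b) hb
  · simp only [sub_self, mul_zero, add_zero, ne_eq, OfNat.ofNat_ne_zero, not_false_eq_true,
      zero_pow, zero_div] at key
    linarith
  · intro y hy
    have hy' : 0 < y := lt_of_lt_of_le hν hy
    have h1 : HasDerivAt logPrim (Real.log y) y := by
      have := ((hasDerivAt_id' y).mul (Real.hasDerivAt_log hy'.ne')).sub (hasDerivAt_id' y)
      refine this.congr_deriv ?_
      field_simp
      ring
    have h0 : HasDerivAt (fun x : ℝ => x - c) 1 y := (hasDerivAt_id y).sub_const c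
    have h2 := (((h0.const_mul (Real.log c)).const_add (logPrim c)).add
      ((h0.pow 2).div_const (2 * ν))).sub h1
    refine h2.congr_deriv ?_
    push_cast
    field_simp
  · intro y hy h
    have hc0 : 0 < c := by linarith
    have hy' : 0 < y := by linarith
    have h1 := Real.log_le_sub_one_of_pos (div_pos hy' hc0)
    rw [Real.log_div hy'.ne' hc0.ne'] at h1
    have h2 : y / c - 1 = (y - c) / c := by field_simp
    have h3 : (y - c) / c ≤ (y - c) / ν := by
      apply div_le_div_of_nonneg_left _ hν hc; linarith
    linarith
  · intro y hy h
    have hc0 : 0 < c := by linarith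
    have hy' : 0 < y := lt_of_lt_of_le hν hy
    have h1 := Real.log_le_sub_one_of_pos (div_pos hc0 hy')
    rw [Real.log_div hc0.ne' hy'.ne'] at h1
    have h2 : c / y - 1 = (c - y) / y := by field_simp
    have h3 : (c - y) / y ≤ (c - y) / ν := by
      apply div_le_div_of_nonneg_left _ hν hy; linarith
    have h4 : (y - c) / ν = -((c - y) / ν) := by ring
    linarith

lemma logPrim_sub_le {a b : ℝ} (ha : 0 < a) (hb : 0 < b) :
    logPrim b - logPrim a ≤ (b - a) * Real.log b := by
  have h1 := Real.log_le_sub_one_of_pos (div_pos hb ha)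
  rw [Real.log_div hb.ne' ha.ne'] at h1
  have h2 := mul_le_mul_of_nonneg_left h1 ha.le
  have h3 : a * (b / a - 1) = b - a := by field_simp
  unfold logPrim
  nlinarith

lemma le_logPrim_sub {w : ℝ} (hw : 1 < w) :
    Real.log w - 1 / (2 * w) - 1 / (6 * w ^ 2) - 1 / (3 * w ^ 3)
      ≤ logPrim w - logPrim (w - 1) := by
  have hw0 : 0 < w := by linarith
  have hi : 1 / w < 1 := by rw [div_lt_one hw0]; exact hw
  have hi0 : 0 < 1 / w := by positivity
  have h1 := log_one_add_le_quintic (x := -(1 / w)) (by linarith)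
  have h2 : Real.log (1 + -(1 / w)) = Real.log (w - 1) - Real.log w := by
    rw [← Real.log_div (by linarith) hw0.ne']
    congr 1; field_simp; ring
  rw [h2] at h1
  set x := 1 / w with hx
  have h3 : Real.log (w - 1) - Real.log w ≤ -x - x ^ 2 / 2 - x ^ 3 / 3 := by
    nlinarith [pow_pos hi0 4, pow_pos hi0 5]
  have h4 := mul_le_mul_of_nonneg_left h3 (by linarith : 0 ≤ w - 1)
  have h5 : (w - 1) * (-x - x ^ 2 / 2 - x ^ 3 / 3)
      = -1 + 1 / (2 * w) + 1 / (6 * w ^ 2) + 1 / (3 * w ^ 3) := by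
    rw [hx]; field_simp; ring
  unfold logPrim
  rw [h5] at h4
  nlinarith

set_option maxHeartbeats 1000000 in
/-- The numerical core of the relative entropy bound: on the left the moment terms of order two to
five in the expansion of `E log (y + u)` around `w = ν + u`, with `y` binomial of mean `ν`; on the
right the loss incurred by replacing `log w` by an increment of `logPrim`, plus the error term. -/
lemma kl_numeric {ν p u w : ℝ} (hν1 : 1 ≤ ν) (hp0 : 0 < p) (hp6 : p ≤ 1 / 6) (hu : 1 ≤ u)
    (hw : w = ν + u) :
    -(1 / (2 * w ^ 2)) * (ν * (1 - p)) + 1 / (3 * w ^ 3) * (ν * (1 - p) * (1 - 2 * p))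
      + -(1 / (4 * w ^ 4)) * (3 * (ν * (1 - p)) ^ 2 + ν * (1 - p) * (1 - 6 * (p * (1 - p))))
      + 1 / (5 * w ^ 5) * (ν * (1 - p) * (1 - 2 * p)
        * (1 + 10 * (ν * (1 - p)) - 12 * (p * (1 - p))))
      ≤ -(1 / (2 * w)) - 1 / (6 * w ^ 2) - 1 / (3 * w ^ 3)
        + (u * (1 / (2 * ν ^ 2) + 3 / ν ^ 3) - 1 / (4 * ν ^ 2)
          + p * (1 / (2 * ν) + 3 / (2 * ν ^ 2)) + 3 / ν ^ 3) := by
  have hw0 : 0 < w := by linarith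
  set c := ν * (1 - p) with hcd
  have hc0 : 0 ≤ c := mul_nonneg (by linarith) (by linarith)
  have hcν : c ≤ ν := by rw [hcd]; nlinarith
  have hpq : 0 ≤ p * (1 - p) := mul_nonneg hp0.le (by linarith)
  have hpq6 : p * (1 - p) ≤ 1 / 6 := by nlinarith
  have b3 : c * (1 - 2 * p) ≤ ν := by nlinarith
  have b4 : 3 * ν ^ 2 * (1 - 2 * p) ≤ 3 * c ^ 2 + c * (1 - 6 * (p * (1 - p))) := by
    have : ν ^ 2 * (1 - 2 * p) ≤ c ^ 2 := by rw [hcd]; nlinarith [sq_nonneg (ν * p)]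
    nlinarith [mul_nonneg hc0 (by linarith : 0 ≤ 1 - 6 * (p * (1 - p)))]
  have b5 : c * (1 - 2 * p) * (1 + 10 * c - 12 * (p * (1 - p))) ≤ 11 * ν ^ 2 := by
    have h1 : 0 ≤ c * (1 - 2 * p) := mul_nonneg hc0 (by linarith)
    calc _ ≤ c * (1 - 2 * p) * (11 * ν) := mul_le_mul_of_nonneg_left (by linarith) h1
      _ ≤ ν * (11 * ν) := mul_le_mul_of_nonneg_right b3 (by linarith)
      _ = _ := by ring
  have d3 := mul_le_mul_of_nonneg_left b3 (by positivity : 0 ≤ 1 / (3 * w ^ 3))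
  have d4 := mul_le_mul_of_nonneg_left b4 (by positivity : 0 ≤ 1 / (4 * w ^ 4))
  have d5 := mul_le_mul_of_nonneg_left b5 (by positivity : 0 ≤ 1 / (5 * w ^ 5))
  -- everything is now compared in terms of `q = ν / w ≤ 1` and `1 / ν`
  have hν0 : 0 < ν := by linarith
  set q := ν / w with hq
  have hq0 : 0 < q := by positivity
  have hq1 : q ≤ 1 := by rw [hq, div_le_one hw0]; linarith
  have hwq : 1 / w = q / ν := by rw [hq]; field_simp
  set r := 1 / ν with hr
  have hr0 : 0 < r := by positivity
  set X := u * r with hX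
  have hX0 : 0 < X := by positivity
  have hqX : q * (1 + X) = 1 := by rw [hq, hX, hr, hw]; field_simp
  have hq4 : 1 - 4 * X ≤ q ^ 4 := by
    have h1 : 1 - X ≤ q := by nlinarith
    have hle : 1 - 4 * (1 - q) ≤ q ^ 4 := by
      nlinarith [sq_nonneg (q - 1), sq_nonneg (q ^ 2 - 1), mul_nonneg hq0.le (sq_nonneg (q - 1))]
    linarith
  have hq2 : q ^ 2 ≤ 1 := by nlinarith
  have hq3 : q ^ 3 ≤ 1 := pow_le_one₀ hq0.le hq1
  have hq5 : q ^ 5 ≤ 1 := pow_le_one₀ hq0.le hq1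
  have hq4' : q ^ 4 ≤ 1 := pow_le_one₀ hq0.le hq1
  have t1 : 1 / (2 * w) - 1 / (2 * w ^ 2) * c = (X * r + p * r) * q ^ 2 / 2 := by
    rw [hX, hr, hq, hcd]; field_simp; rw [hw]; ring
  have t2 : 1 / (6 * w ^ 2) = r ^ 2 * q ^ 2 / 6 := by rw [hr, hq]; field_simp
  have t3 : 1 / (3 * w ^ 3) = r ^ 3 * q ^ 3 / 3 := by rw [hr, hq]; field_simp
  have t4 : 1 / (3 * w ^ 3) * ν = r ^ 2 * q ^ 3 / 3 := by rw [hr, hq]; field_simp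
  have t5 : 1 / (4 * w ^ 4) * (3 * ν ^ 2 * (1 - 2 * p)) = 3 / 4 * r ^ 2 * q ^ 4 * (1 - 2 * p) := by
    rw [hr, hq]; field_simp
  have t6 : 1 / (5 * w ^ 5) * (11 * ν ^ 2) = 11 / 5 * r ^ 3 * q ^ 5 := by
    rw [hr, hq]; field_simp
  have t7 : u * (1 / (2 * ν ^ 2) + 3 / ν ^ 3) - 1 / (4 * ν ^ 2)
          + p * (1 / (2 * ν) + 3 / (2 * ν ^ 2)) + 3 / ν ^ 3
      = X * r / 2 + 3 * X * r ^ 2 - r ^ 2 / 4 + p * r / 2 + 3 / 2 * p * r ^ 2 + 3 * r ^ 3 := by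
    rw [hX, hr]; field_simp; ring
  have s1 : (X * r + p * r) * q ^ 2 / 2 ≤ (X * r + p * r) / 2 := by
    have := mul_le_of_le_one_right (by positivity : 0 ≤ X * r + p * r) hq2
    linarith
  have s2 : r ^ 2 * q ^ 2 / 6 ≤ r ^ 2 / 6 := by linarith [mul_le_of_le_one_right (sq_nonneg r) hq2]
  have s3 : r ^ 3 * q ^ 3 / 3 ≤ r ^ 3 / 3 := by
    linarith [mul_le_of_le_one_right (pow_pos hr0 3).le hq3]
  have s4 : r ^ 2 * q ^ 3 / 3 ≤ r ^ 2 / 3 := by linarith [mul_le_of_le_one_right (sq_nonneg r) hq3]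
  have s5 : 3 / 4 * r ^ 2 * (1 - 4 * X) - 3 / 2 * p * r ^ 2
      ≤ 3 / 4 * r ^ 2 * q ^ 4 * (1 - 2 * p) := by
    have h1 : r ^ 2 * (1 - 4 * X) ≤ r ^ 2 * q ^ 4 := mul_le_mul_of_nonneg_left hq4 (sq_nonneg r)
    have h2 : p * r ^ 2 * q ^ 4 ≤ p * r ^ 2 * 1 := mul_le_mul_of_nonneg_left hq4' (by positivity)
    have h3 : 3 / 4 * r ^ 2 * q ^ 4 * (1 - 2 * p)
        = 3 / 4 * (r ^ 2 * q ^ 4) - 3 / 2 * (p * r ^ 2 * q ^ 4) := by ring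
    rw [h3]
    linarith
  have s6 : 11 / 5 * r ^ 3 * q ^ 5 ≤ 11 / 5 * r ^ 3 :=
    mul_le_of_le_one_right (by positivity) hq5
  rw [t7]
  rw [t4] at d3
  rw [t5] at d4
  rw [t6] at d5
  have := pow_pos hr0 3
  linarith

/-- Fifth-order expansion of `E log (y + u)`, compared with the increment of `logPrim`. -/
lemma stExp_log_le {n M : ℕ} (hn : 6 ≤ n) (hM : n ≤ M) (x : Fin n) {u ν p : ℝ} (hu : 1 ≤ u)
    (hν : ν = (M : ℝ) / n) (hp : p = 1 / n) :
    stExp n M (fun y => Real.log ((y x : ℝ) + u))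
      ≤ logPrim (ν + u) - logPrim (ν + u - 1)
        + (u * (1 / (2 * ν ^ 2) + 3 / ν ^ 3) - 1 / (4 * ν ^ 2)
          + p * (1 / (2 * ν) + 3 / (2 * ν ^ 2)) + 3 / ν ^ 3) := by
  have hn0 : 0 < n := by omega
  have hn' : (0 : ℝ) < n := by positivity
  have hν1 : 1 ≤ ν := by
    rw [hν, le_div_iff₀ hn', one_mul]; exact_mod_cast hM
  have hp0 : 0 < p := by rw [hp]; positivity
  have hp6 : p ≤ 1 / 6 := by
    rw [hp]; apply one_div_le_one_div_of_le (by norm_num); exact_mod_cast hn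
  obtain ⟨m1, m2, m3, m4, m5⟩ := centralMoments hn0 M x p hp
  set w := ν + u with hw
  have hw0 : 0 < w := by linarith
  have hlog : ∀ y : Fin n → ℕ, Real.log ((y x : ℝ) + u) ≤ Real.log w
      + (1 / w) * ((y x : ℝ) - M / n) + (-(1 / (2 * w ^ 2))) * ((y x : ℝ) - M / n) ^ 2
      + (1 / (3 * w ^ 3)) * ((y x : ℝ) - M / n) ^ 3 + (-(1 / (4 * w ^ 4))) * ((y x : ℝ) - M / n) ^ 4
      + (1 / (5 * w ^ 5)) * ((y x : ℝ) - M / n) ^ 5 := by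
    intro y
    set g := (y x : ℝ) - M / n with hg
    have hpos : 0 < (y x : ℝ) + u := by positivity
    have h1 : (y x : ℝ) + u = w * (1 + g / w) := by
      field_simp; rw [hg, hw, hν]; ring
    have h2 : 0 < 1 + g / w := by
      rw [h1] at hpos; exact pos_of_mul_pos_right hpos hw0.le
    have h3 := log_one_add_le_quintic (x := g / w) (by linarith)
    rw [h1, Real.log_mul hw0.ne' h2.ne']
    have h4 : g / w - (g / w) ^ 2 / 2 + (g / w) ^ 3 / 3 - (g / w) ^ 4 / 4 + (g / w) ^ 5 / 5
        = (1 / w) * g + (-(1 / (2 * w ^ 2))) * g ^ 2 + (1 / (3 * w ^ 3)) * g ^ 3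
          + (-(1 / (4 * w ^ 4))) * g ^ 4 + (1 / (5 * w ^ 5)) * g ^ 5 := by
      field_simp; ring
    linarith
  refine (stExp_mono fun y _ => hlog y).trans ?_
  simp only [stExp_add, stExp_mul, stExp_const hn0, m1, m2, m3, m4, m5]
  have hG := le_logPrim_sub (w := w) (by linarith)
  have hc : (M : ℝ) * (p * (1 - p)) = ν * (1 - p) := by rw [hν, hp]; ring
  rw [hc]
  have hnum := kl_numeric hν1 hp0 hp6 hu hw
  linarith

/-- Upper bound for the Kullback-Leibler divergence of PL_A(m,n) from ST(m,n). -/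
lemma stExp_log_likRatio_le {n M m : ℕ} (hn : 6 ≤ n) (hM : n ≤ M) (a : Fin n → ℕ)
    (hm : m = M + ∑ i, a i) {ν p S k : ℝ} (hν : ν = (M : ℝ) / n) (hp : p = 1 / n)
    (hS : S = ∑ i, (a i : ℝ) ^ 2) (hk : k = ∑ i, (a i : ℝ)) :
    stExp n M (fun y => Real.log (likRatio n m a (y + a)))
      ≤ (∑ i, ((a i : ℝ) - k / n) ^ 2) / (2 * ν) + S / (4 * ν ^ 2) + 3 * (S + k) / (2 * ν ^ 3)
        + k * (p * (1 / (2 * ν) + 3 / (2 * ν ^ 2)) + 3 / ν ^ 3) := by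
  have hn0 : 0 < n := by omega
  have hn' : (0 : ℝ) < n := by positivity
  have hν1 : 1 ≤ ν := by
    rw [hν, le_div_iff₀ hn', one_mul]; exact_mod_cast hM
  have hν0 : 0 < ν := by linarith
  have hk0 : 0 ≤ k := by rw [hk]; exact Finset.sum_nonneg fun i _ => by positivity
  rw [stExp_congr fun y hy => log_likRatio_add hn0 a hm hy, stExp_sub, stExp_const hn0, stExp_sum]
  simp only [stExp_sum]
  set A := 1 / (2 * ν ^ 2) + 3 / ν ^ 3 with hA
  set B := - (1 / (4 * ν ^ 2)) + p * (1 / (2 * ν) + 3 / (2 * ν ^ 2)) + 3 / ν ^ 3 with hB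
  have h1 : ∀ i, ∑ u ∈ range (a i), stExp n M (fun y => Real.log ((y i : ℝ) + (u + 1)))
      ≤ logPrim (ν + a i) - logPrim ν + A * (((a i : ℝ) ^ 2 + a i) / 2) + B * a i := by
    intro i
    have hgen : ∀ b : ℕ, ∑ u ∈ range b, stExp n M (fun y => Real.log ((y i : ℝ) + (u + 1)))
        ≤ logPrim (ν + b) - logPrim ν + A * (((b : ℝ) ^ 2 + b) / 2) + B * b := by
      intro b
      induction b with
      | zero => simp
      | succ b ih =>
        rw [Finset.sum_range_succ]
        have := stExp_log_le hn hM i (u := (b : ℝ) + 1) (by linarith [(Nat.cast_nonneg b : (0 : ℝ) ≤ b)])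
          hν hp
        rw [← add_assoc ν, add_sub_cancel_right] at this
        push_cast
        rw [← add_assoc ν]
        have e : ((b : ℝ) + 1) * (1 / (2 * ν ^ 2) + 3 / ν ^ 3) - 1 / (4 * ν ^ 2)
          + p * (1 / (2 * ν) + 3 / (2 * ν ^ 2)) + 3 / ν ^ 3 = ((b : ℝ) + 1) * A + B := by
          rw [hA, hB]; ring
        rw [e] at this
        linarith
    exact hgen (a i)
  have h2 : n * (logPrim (ν + k / n) - logPrim ν)
      ≤ ∑ s ∈ range (∑ i, a i), Real.log (((M : ℝ) + (s + 1)) / n) := by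
    have hgen : ∀ b : ℕ, n * (logPrim (ν + b / n) - logPrim ν)
        ≤ ∑ s ∈ range b, Real.log (((M : ℝ) + (s + 1)) / n) := by
      intro b
      induction b with
      | zero => simp
      | succ b ih =>
        rw [Finset.sum_range_succ]
        have e := logPrim_sub_le (a := ν + b / n) (b := ν + (b + 1) / n) (by positivity)
          (by positivity)
        have e1 : ν + ((b : ℝ) + 1) / n - (ν + b / n) = 1 / n := by ring
        have e2 : ((M : ℝ) + (b + 1)) / n = ν + (b + 1) / n := by rw [hν]; ring
        rw [e1] at e
        rw [e2]
        push_cast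
        have e3 := mul_le_mul_of_nonneg_left e hn'.le
        have e4 : (n : ℝ) * (1 / n * Real.log (ν + (b + 1) / n)) = Real.log (ν + (b + 1) / n) := by
          field_simp
        rw [e4] at e3
        linarith
    have := hgen (∑ i, a i)
    rwa [show ((∑ i, a i : ℕ) : ℝ) = k by rw [hk]; push_cast; rfl] at this
  have h3 : ∑ i, logPrim (ν + a i)
      ≤ n * logPrim (ν + k / n) + (∑ i, ((a i : ℝ) - k / n) ^ 2) / (2 * ν) := by
    have e : ∀ i, logPrim (ν + a i) ≤ logPrim (ν + k / n)
        + Real.log (ν + k / n) * ((a i : ℝ) - k / n) + ((a i : ℝ) - k / n) ^ 2 / (2 * ν) := by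
      intro i
      have := logPrim_le (b := ν + a i) (c := ν + k / n) hν0
        (by linarith [(Nat.cast_nonneg (a i) : (0 : ℝ) ≤ a i)])
        (by have : 0 ≤ k / n := by positivity
            linarith)
      rwa [add_sub_add_left_eq_sub] at this
    refine (Finset.sum_le_sum fun i _ => e i).trans_eq ?_
    rw [Finset.sum_add_distrib, Finset.sum_add_distrib, ← Finset.mul_sum, Finset.sum_sub_distrib,
      ← hk, Finset.sum_div]
    simp only [Finset.sum_const, Finset.card_univ, Fintype.card_fin, nsmul_eq_mul]
    have : (n : ℝ) * (k / n) = k := by field_simp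
    rw [this, sub_self, mul_zero, add_zero]
  have h4 := Finset.sum_le_sum fun i (_ : i ∈ (univ : Finset (Fin n))) => h1 i
  rw [Finset.sum_add_distrib, Finset.sum_add_distrib, Finset.sum_sub_distrib, ← Finset.mul_sum,
    ← Finset.mul_sum, ← Finset.sum_div, Finset.sum_add_distrib, ← hk, ← hS] at h4
  simp only [Finset.sum_const, Finset.card_univ, Fintype.card_fin, nsmul_eq_mul] at h4
  have h5 : A * ((S + k) / 2) + B * k = S / (4 * ν ^ 2) + 3 * (S + k) / (2 * ν ^ 3)
        + k * (p * (1 / (2 * ν) + 3 / (2 * ν ^ 2)) + 3 / ν ^ 3) := by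
    rw [hA, hB]; field_simp; ring
  linarith

/-! ### Gaussian computations -/

open ProbabilityTheory MeasureTheory in
lemma gaussian_Iic {σ : ℝ} (hσ : 0 < σ) (μ t : ℝ) :
    (gaussianReal μ (σ ^ 2).toNNReal).real (Set.Iic t) = stdNormalCDF ((t - μ) / σ) := by
  have h1 : gaussianReal μ (σ ^ 2).toNNReal
      = (gaussianReal 0 1).map (fun x => μ + σ * x) := by
    have : (fun x => μ + σ * x) = (μ + ·) ∘ (σ * ·) := rfl
    rw [this, ← Measure.map_map (by fun_prop) (by fun_prop), gaussianReal_map_const_mul,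
      gaussianReal_map_const_add]
    congr 1
    · simp
    · ext; simp [sq_nonneg]
  have h2 : (fun x => μ + σ * x) ⁻¹' Set.Iic t = Set.Iic ((t - μ) / σ) := by
    ext x
    simp only [Set.mem_preimage, Set.mem_Iic]
    rw [le_div_iff₀ hσ]
    constructor <;> intro h <;> linarith
  rw [h1, measureReal_def, Measure.map_apply (by fun_prop) measurableSet_Iic, h2,
    gaussianReal_apply_eq_integral 0 one_ne_zero, ENNReal.toReal_ofReal]
  · unfold stdNormalCDF
    refine integral_congr_ae (ae_of_all _ fun x => ?_)
    simp [gaussianPDFReal]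
    ring
  · exact setIntegral_nonneg measurableSet_Iic fun x _ => gaussianPDFReal_nonneg _ _ _

open ProbabilityTheory MeasureTheory in
lemma stdNormalCDF_neg (x : ℝ) : stdNormalCDF (-x) = 1 - stdNormalCDF x := by
  have hg : ∀ t, stdNormalCDF t = (gaussianReal 0 1).real (Set.Iic t) := by
    intro t
    have := gaussian_Iic one_pos 0 t
    simpa using this.symm
  rw [hg, hg]
  have h1 : (gaussianReal 0 1).real (Set.Iic (-x)) = (gaussianReal 0 1).real (Set.Ici x) := by
    have hm : (gaussianReal 0 1).map (fun x => -x) = gaussianReal 0 1 := by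
      rw [gaussianReal_map_neg]; simp
    conv_lhs => rw [← hm]
    rw [measureReal_def, measureReal_def, Measure.map_apply (by fun_prop) measurableSet_Iic]
    congr 2
    ext y; simp
  have : NullSingletonClass (gaussianReal 0 1) := nullSingletonClass_gaussianReal one_ne_zero
  rw [h1, ← Set.compl_Iio, probReal_compl_eq_one_sub measurableSet_Iio]
  congr 1
  rw [measureReal_def, measureReal_def, measure_congr Iio_ae_eq_Iic]

open ProbabilityTheory MeasureTheory in
/-- The limiting total variation distance: exponential tilting by `x - σ² / 2` shifts the centred
Gaussian of variance `σ²` to mean `σ²`. -/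
lemma gaussian_tv {σ : ℝ} (hσ : 0 < σ) :
    ∫ x, max 0 (1 - Real.exp (x - σ ^ 2 / 2)) ∂(gaussianReal 0 (σ ^ 2).toNNReal)
      = 2 * stdNormalCDF (1 / 2 * σ) - 1 := by
  have hv : (σ ^ 2).toNNReal ≠ 0 := by
    simp only [ne_eq, Real.toNNReal_eq_zero, not_le]; positivity
  have hvc : (((σ ^ 2).toNNReal : NNReal) : ℝ) = σ ^ 2 := Real.coe_toNNReal _ (sq_nonneg _)
  set γ := gaussianReal 0 (σ ^ 2).toNNReal with hγ
  set s := Set.Iic (σ ^ 2 / 2) with hs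
  have e1 : ∀ x, max 0 (1 - Real.exp (x - σ ^ 2 / 2))
      = s.indicator (fun _ => (1 : ℝ)) x - s.indicator (fun x => Real.exp (x - σ ^ 2 / 2)) x := by
    intro x
    by_cases hx : x ∈ s
    · rw [Set.indicator_of_mem hx, Set.indicator_of_mem hx, max_eq_right]
      have : x ≤ σ ^ 2 / 2 := hx
      rw [sub_nonneg, Real.exp_le_one_iff]; linarith
    · rw [Set.indicator_of_notMem hx, Set.indicator_of_notMem hx, max_eq_left, sub_self]
      have : σ ^ 2 / 2 < x := not_le.1 hx
      rw [sub_nonpos, Real.one_le_exp_iff]; linarith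
  have i1 : Integrable (s.indicator (fun _ => (1 : ℝ))) γ :=
    (integrable_const 1).indicator measurableSet_Iic
  have i2 : Integrable (s.indicator (fun x => Real.exp (x - σ ^ 2 / 2))) γ := by
    refine Integrable.indicator ?_ measurableSet_Iic
    have := (integrable_exp_mul_gaussianReal (μ := 0) (v := (σ ^ 2).toNNReal) 1).div_const
      (Real.exp (σ ^ 2 / 2))
    refine this.congr (ae_of_all _ fun x => ?_)
    simp [Real.exp_sub]
  have e2 : ∫ x, s.indicator (fun x => Real.exp (x - σ ^ 2 / 2)) x ∂γ
      = ∫ x, s.indicator (fun _ => (1 : ℝ)) x ∂(gaussianReal (σ ^ 2) (σ ^ 2).toNNReal) := by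
    rw [hγ, integral_gaussianReal_eq_integral_smul hv, integral_gaussianReal_eq_integral_smul hv]
    refine integral_congr_ae (ae_of_all _ fun x => ?_)
    by_cases hx : x ∈ s
    · simp only [Set.indicator_of_mem hx, smul_eq_mul, mul_one, gaussianPDFReal, hvc]
      rw [mul_assoc, ← Real.exp_add]
      congr 2
      field_simp
      ring
    · simp [Set.indicator_of_notMem hx]
  simp_rw [e1]
  rw [integral_sub i1 i2, e2, integral_indicator_const _ measurableSet_Iic,
    integral_indicator_const _ measurableSet_Iic, hγ, gaussian_Iic hσ, gaussian_Iic hσ]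
  have a1 : (σ ^ 2 / 2 - 0) / σ = 1 / 2 * σ := by field_simp; ring
  have a2 : (σ ^ 2 / 2 - σ ^ 2) / σ = -(1 / 2 * σ) := by field_simp; ring
  rw [a1, a2, stdNormalCDF_neg]
  simp; ring

open ProbabilityTheory MeasureTheory in
/-- `exp (x - σ² / 2)` has Gaussian mean one, and truncation only decreases it. -/
lemma gaussian_exp_min_le (σ K : ℝ) :
    ∫ x, Real.exp (min x K - σ ^ 2 / 2) ∂(gaussianReal 0 (σ ^ 2).toNNReal) ≤ 1 := by
  have hvc : (((σ ^ 2).toNNReal : NNReal) : ℝ) = σ ^ 2 := Real.coe_toNNReal _ (sq_nonneg _)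
  have hm := congrFun (mgf_id_gaussianReal (μ := 0) (v := (σ ^ 2).toNNReal)) 1
  have hi := (integrable_exp_mul_gaussianReal (μ := 0) (v := (σ ^ 2).toNNReal) 1).div_const
      (Real.exp (σ ^ 2 / 2))
  calc _ ≤ ∫ x, Real.exp (1 * x) / Real.exp (σ ^ 2 / 2) ∂(gaussianReal 0 (σ ^ 2).toNNReal) := by
        refine integral_mono_of_nonneg (ae_of_all _ fun x => (Real.exp_pos _).le) hi
          (ae_of_all _ fun x => ?_)
        simp only [one_mul, ← Real.exp_sub]
        exact Real.exp_le_exp.2 (by linarith [min_le_left x K])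
    _ = 1 := by
        rw [integral_div]
        simp only [mgf, id, hvc] at hm
        rw [hm]; simp

/-! ### From the statistic to the total variation distance -/

/-- The pointwise bound behind the comparison of the likelihood ratio with a candidate `exp G`:
the squared Hellinger integrand is at most the relative entropy integrand. -/
lemma hellinger_le_entropy {L : ℝ} (hL : 0 ≤ L) (G : ℝ) :
    (Real.sqrt L - Real.exp (G / 2)) ^ 2 ≤ L * (Real.log L - G) - L + Real.exp G := by
  have hG : Real.exp (G / 2) ^ 2 = Real.exp G := by rw [← Real.exp_nat_mul]; congr 1; push_cast; ring
  rcases hL.eq_or_lt with rfl | hL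
  · simp [hG]
  · have h1 : Real.sqrt L ^ 2 = L := Real.sq_sqrt hL.le
    have h2 : Real.sqrt L * Real.exp (G / 2) = L * Real.exp ((G - Real.log L) / 2) := by
      have e : Real.sqrt L = Real.exp (Real.log L / 2) := by
        rw [Real.exp_half, Real.exp_log hL]
      conv_rhs => rw [← Real.exp_log hL, Real.log_exp]
      rw [e, ← Real.exp_add, ← Real.exp_add]; congr 1; ring
    have h3 := mul_le_mul_of_nonneg_left (Real.add_one_le_exp ((G - Real.log L) / 2)) hL.le
    nlinarith

/-- If `exp G` nearly matches the likelihood ratio in relative entropy, then the total variation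
distance is nearly `E (1 - exp G)⁺`. -/
lemma tvDist_approx {n M m : ℕ} (hn : 0 < n) (a : Fin n → ℕ) (hm : m = M + ∑ i, a i)
    (G : (Fin n → ℕ) → ℝ) {t : ℝ} (ht : 0 < t) :
    |tvDist n m a - stExp n m (fun z => max 0 (1 - Real.exp (G z)))|
      ≤ (stExp n M (fun y => Real.log (likRatio n m a (y + a))) - stExp n M (fun y => G (y + a))
          - 1 + stExp n m (fun z => Real.exp (G z))) / (2 * t)
        + t * (1 + stExp n m (fun z => Real.exp (G z))) := by
  rw [tvDist_eq hn a hm, ← stExp_sub]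
  refine (abs_stExp_le _).trans ?_
  have hpt : ∀ z : Fin n → ℕ, ∑ i, z i = m →
      |max 0 (1 - likRatio n m a z) - max 0 (1 - Real.exp (G z))|
      ≤ 1 / (2 * t) * (likRatio n m a z * (Real.log (likRatio n m a z) - G z)
          - likRatio n m a z + Real.exp (G z)) + t * (likRatio n m a z + Real.exp (G z)) := by
    intro z _
    have hL := likRatio_nonneg n m a z
    generalize likRatio n m a z = L at *
    have h1 : |max 0 (1 - L) - max 0 (1 - Real.exp (G z))| ≤ |L - Real.exp (G z)| := by
      have := abs_max_sub_max_le_abs (1 - L) (1 - Real.exp (G z)) 0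
      rw [max_comm 0, max_comm 0]
      refine this.trans_eq ?_
      rw [sub_sub_sub_cancel_left, abs_sub_comm]
    have h2 := hellinger_le_entropy hL (G z)
    have h3 : Real.exp (G z) = Real.exp (G z / 2) ^ 2 := by
      rw [← Real.exp_nat_mul]; congr 1; push_cast; ring
    have h4 : L = Real.sqrt L ^ 2 := (Real.sq_sqrt hL).symm
    set u := Real.sqrt L
    set v := Real.exp (G z / 2)
    have h5 : |L - Real.exp (G z)| ≤ 1 / (2 * t) * (u - v) ^ 2 + t * (L + Real.exp (G z)) := by
      have hu : 0 ≤ u := Real.sqrt_nonneg _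
      have hv : 0 < v := Real.exp_pos _
      have e : |L - Real.exp (G z)| = |u - v| * (u + v) := by
        rw [h3, h4, ← abs_of_nonneg (add_nonneg hu hv.le), ← abs_mul]; congr 1; ring
      rw [e, h3, h4, ← sq_abs (u - v)]
      generalize |u - v| = d
      have e2 : 1 / (2 * t) * d ^ 2 + t * (u ^ 2 + v ^ 2) - d * (u + v)
          = 1 / (2 * t) * (d - t * (u + v)) ^ 2 + t / 2 * (u - v) ^ 2 := by
        field_simp; ring
      have : 0 ≤ 1 / (2 * t) * (d - t * (u + v)) ^ 2 + t / 2 * (u - v) ^ 2 := by positivity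
      linarith
    have h6 : 1 / (2 * t) * (u - v) ^ 2
        ≤ 1 / (2 * t) * (L * (Real.log L - G z) - L + Real.exp (G z)) :=
      mul_le_mul_of_nonneg_left h2 (by positivity)
    linarith
  refine (stExp_mono hpt).trans_eq ?_
  rw [stExp_add, stExp_mul, stExp_mul, stExp_add, stExp_sub, stExp_add,
    stExp_likRatio_mul hn a hm (fun z => Real.log (likRatio n m a z) - G z),
    stExp_sub, stExp_likRatio hn a hm]
  ring

/-- Truncating `T` at level `K` lowers its mean by at most `E T² / K`. -/
lemma stExp_min_ge (n M : ℕ) (T : (Fin n → ℕ) → ℝ) {K : ℝ} (hK : 0 < K) :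
    stExp n M T - stExp n M (fun y => T y ^ 2) / K ≤ stExp n M (fun y => min (T y) K) := by
  have h : stExp n M (fun y => T y - 1 / K * T y ^ 2) ≤ stExp n M (fun y => min (T y) K) := by
    refine stExp_mono fun y _ => ?_
    have h0 : 0 ≤ 1 / K * T y ^ 2 := by positivity
    refine le_min (by linarith) ?_
    have : K - (T y - 1 / K * T y ^ 2) = 1 / K * ((T y - K / 2) ^ 2 + 3 / 4 * K ^ 2) := by
      field_simp; ring
    have : 0 ≤ 1 / K * ((T y - K / 2) ^ 2 + 3 / 4 * K ^ 2) := by positivity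
    linarith
  rw [stExp_sub, stExp_mul] at h
  linarith [show stExp n M (fun y => T y ^ 2) / K = 1 / K * stExp n M (fun y => T y ^ 2) by ring]

open ProbabilityTheory MeasureTheory in
/-- Soft form of the limit theorem: a statistic `T` that is asymptotically `N(0, σ²)` under the
standard distribution, with planted mean tending to `σ²` and bounded planted second moment, forces
the limit of the total variation distance as soon as the relative entropy of the planted
distribution is at most `σ² / 2 + o(1)`. -/
lemma tendsto_tvDist_of_stat {m M : ℕ → ℕ} {a : (n : ℕ) → Fin n → ℕ}
    (hm : ∀ n, m n = M n + ∑ i, a n i) {T : (n : ℕ) → (Fin n → ℕ) → ℝ} {σ B : ℝ} {U : ℕ → ℝ}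
    (hσ : 0 < σ)
    (hT : ∀ f : BoundedContinuousFunction ℝ ℝ, Tendsto (fun n => stExp n (m n) (fun z => f (T n z)))
      atTop (𝓝 (∫ x, f x ∂gaussianReal 0 (σ ^ 2).toNNReal)))
    (hKL : ∀ᶠ n in atTop, stExp n (M n) (fun y => Real.log (likRatio n (m n) (a n) (y + a n))) ≤ U n)
    (hU : Tendsto U atTop (𝓝 (σ ^ 2 / 2)))
    (hE : Tendsto (fun n => stExp n (M n) (fun y => T n (y + a n))) atTop (𝓝 (σ ^ 2)))
    (hB : ∀ᶠ n in atTop, stExp n (M n) (fun y => T n (y + a n) ^ 2) ≤ B) :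
    Tendsto (fun n => tvDist n (m n) (a n)) atTop (𝓝 (2 * stdNormalCDF (1 / 2 * σ) - 1)) := by
  rw [Metric.tendsto_nhds]
  intro ε hε
  set t := ε / 12 with ht
  have ht0 : 0 < t := by positivity
  set K := max (max (σ ^ 2 / 2) 1) (4 * B / (t * ε)) with hK
  have hKσ : σ ^ 2 / 2 ≤ K := (le_max_left _ _).trans (le_max_left _ _)
  have hK0 : 0 < K := lt_of_lt_of_le one_pos ((le_max_right _ _).trans (le_max_left _ _))
  have hKB : B / K ≤ t * ε / 4 := by
    have : 4 * B / (t * ε) ≤ K := le_max_right _ _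
    rw [div_le_iff₀ (by positivity)] at this
    rw [div_le_iff₀ hK0]; linarith
  let φ : BoundedContinuousFunction ℝ ℝ := BoundedContinuousFunction.ofNormedAddCommGroup
    (fun x => max 0 (1 - Real.exp (x - σ ^ 2 / 2))) (by fun_prop) 1 (by
      intro x
      rw [Real.norm_eq_abs, abs_of_nonneg (le_max_left _ _)]
      exact max_le zero_le_one (by linarith [Real.exp_pos (x - σ ^ 2 / 2)]))
  let g : BoundedContinuousFunction ℝ ℝ := BoundedContinuousFunction.ofNormedAddCommGroup
    (fun x => Real.exp (min x K - σ ^ 2 / 2)) (by fun_prop) (Real.exp (K - σ ^ 2 / 2)) (by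
      intro x
      rw [Real.norm_eq_abs, abs_of_pos (Real.exp_pos _), Real.exp_le_exp]
      linarith [min_le_right x K])
  have hφ := hT φ
  have hg := hT g
  have hφI : ∫ x, φ x ∂gaussianReal 0 (σ ^ 2).toNNReal = 2 * stdNormalCDF (1 / 2 * σ) - 1 :=
    gaussian_tv hσ
  have hgI : ∫ x, g x ∂gaussianReal 0 (σ ^ 2).toNNReal ≤ 1 := gaussian_exp_min_le σ K
  rw [hφI, Metric.tendsto_nhds] at hφ
  have hδ : 0 < min 1 (t * ε / 16) := by positivity
  filter_upwards [hφ (ε / 4) (by positivity), hg.eventually_lt_const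
      (lt_add_of_pos_right _ hδ), hKL, hB, hU.eventually_lt_const
      (lt_add_of_pos_right _ (show 0 < t * ε / 16 by positivity)),
      hE.eventually_const_lt (sub_lt_self _ (show 0 < t * ε / 16 by positivity)),
      eventually_gt_atTop 0] with n h1 h2 h3 h4 h5 h6 hn
  have hg' : stExp n (m n) (fun z => g (T n z)) < 1 + min 1 (t * ε / 16) := by linarith
  have h7 := tvDist_approx hn (a n) (hm n) (fun z => min (T n z) K - σ ^ 2 / 2) ht0
  have h8 := stExp_min_ge n (M n) (fun y => T n (y + a n)) hK0
  have h9 : stExp n (M n) (fun y => T n (y + a n) ^ 2) / K ≤ B / K :=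
    div_le_div_of_nonneg_right h4 hK0.le
  have h10 : stExp n (m n) (fun z => max 0 (1 - Real.exp (min (T n z) K - σ ^ 2 / 2)))
      = stExp n (m n) (fun z => φ (T n z)) := by
    refine stExp_congr fun z _ => ?_
    change _ = max 0 (1 - Real.exp (T n z - σ ^ 2 / 2))
    rcases le_total (T n z) K with h | h
    · rw [min_eq_left h]
    · rw [min_eq_right h, max_eq_left, max_eq_left]
      · rw [sub_nonpos, Real.one_le_exp_iff]; linarith
      · rw [sub_nonpos, Real.one_le_exp_iff]; linarith
  rw [h10, stExp_sub, stExp_const hn] at h7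
  change _ ≤ (_ - _ - 1 + stExp n (m n) (fun z => g (T n z))) / (2 * t)
    + t * (1 + stExp n (m n) (fun z => g (T n z))) at h7
  have h11 : (stExp n (M n) (fun y => Real.log (likRatio n (m n) (a n) (y + a n)))
      - (stExp n (M n) (fun y => min (T n (y + a n)) K) - σ ^ 2 / 2) - 1
      + stExp n (m n) (fun z => g (T n z))) / (2 * t) ≤ ε / 4 := by
    rw [div_le_iff₀ (by positivity)]
    have := min_le_right 1 (t * ε / 16)
    have : 0 < t * ε := by positivity
    nlinarith
  have h12 : t * (1 + stExp n (m n) (fun z => g (T n z))) ≤ ε / 4 := by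
    have := min_le_left 1 (t * ε / 16)
    have : t * (1 + stExp n (m n) (fun z => g (T n z))) ≤ t * 3 :=
      mul_le_mul_of_nonneg_left (by linarith) ht0.le
    linarith
  rw [Real.dist_eq] at h1 ⊢
  have := abs_sub_le (tvDist n (m n) (a n)) (stExp n (m n) (fun z => φ (T n z)))
    (2 * stdNormalCDF (1 / 2 * σ) - 1)
  linarith

/-! ### The test statistic in the intermediate regime -/

/-- Since `a² ≥ a` for integers, a planting with fewer than `n / 2` balls is too uneven for the
intermediate regime. -/
lemma planted_ge_half {A : (n : ℕ) → Fin n → ℕ} {k : ℕ → ℕ} (hka : ∀ n, ∑ i, A n i = k n)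
    (hk : Tendsto (fun n : ℕ => (k n : ℝ) / Real.sqrt n) atTop atTop) {lam : ℝ}
    (hx : Tendsto (fun n : ℕ => (n : ℝ) ^ ((3 : ℝ) / 2) * plantV n (A n) / (k n : ℝ)) atTop
      (𝓝 lam)) : ∀ᶠ n : ℕ in atTop, (n : ℝ) ≤ 2 * k n := by
  have hs : Tendsto (fun n : ℕ => Real.sqrt n) atTop atTop :=
    Real.tendsto_sqrt_atTop.comp tendsto_natCast_atTop_atTop
  filter_upwards [hx.eventually_lt_const (lt_add_one lam), hs.eventually_gt_atTop (2 * (lam + 1)),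
    hk.eventually_gt_atTop 0, eventually_gt_atTop 0] with n h1 h2 h3 hn
  by_contra! hlt
  have hn0 : (0 : ℝ) < n := by exact_mod_cast hn
  have hsp : 0 < Real.sqrt n := Real.sqrt_pos.2 hn0
  have hk0 : (0 : ℝ) < k n := by
    by_contra! h
    have : (k n : ℝ) / Real.sqrt n ≤ 0 := div_nonpos_of_nonpos_of_nonneg h hsp.le
    linarith
  have hkr : ∑ i, (A n i : ℝ) = k n := by exact_mod_cast hka n
  have hS : (k n : ℝ) ≤ ∑ i, (A n i : ℝ) ^ 2 := by
    rw [← hkr]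
    refine Finset.sum_le_sum fun i _ => ?_
    exact_mod_cast Nat.le_self_pow two_ne_zero (A n i)
  have hV : (k n : ℝ) / (2 * n) ≤ plantV n (A n) := by
    rw [plantV, hkr]
    have e1 : (k n : ℝ) / n ≤ (∑ i, (A n i : ℝ) ^ 2) / n := div_le_div_of_nonneg_right hS hn0.le
    have e2 : (k n : ℝ) / n ≤ 1 / 2 := by rw [div_le_iff₀ hn0]; linarith
    have e3 : 0 < (k n : ℝ) / n := by positivity
    have e4 : (k n : ℝ) / (2 * n) = (k n : ℝ) / n / 2 := by field_simp
    nlinarith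
  have e : (n : ℝ) ^ ((3 : ℝ) / 2) = n * Real.sqrt n := by
    rw [show (3 : ℝ) / 2 = 1 + 1 / 2 by norm_num, Real.rpow_add hn0, Real.rpow_one,
      ← Real.sqrt_eq_rpow]
  rw [e] at h1
  have h4 : (n : ℝ) * Real.sqrt n * (k n / (2 * n)) / k n ≤ n * Real.sqrt n * plantV n (A n) / k n :=
    div_le_div_of_nonneg_right (mul_le_mul_of_nonneg_left hV (by positivity)) hk0.le
  have h5 : (n : ℝ) * Real.sqrt n * (k n / (2 * n)) / k n = Real.sqrt n / 2 := by field_simp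
  linarith

lemma sum_sq_dev {n : ℕ} (hn : 0 < n) (a : Fin n → ℕ) {k : ℝ} (hk : ∑ i, (a i : ℝ) = k) :
    ∑ i, ((a i : ℝ) - k / n) ^ 2 = n * plantV n a := by
  have hn0 : (n : ℝ) ≠ 0 := by positivity
  have : ∀ i, ((a i : ℝ) - k / n) ^ 2 = (a i : ℝ) ^ 2 - 2 * (k / n) * a i + (k / n) ^ 2 := by
    intro i; ring
  simp_rw [this]
  rw [Finset.sum_add_distrib, Finset.sum_sub_distrib, ← Finset.mul_sum, hk, plantV, hk]
  simp only [Finset.sum_const, Finset.card_univ, Fintype.card_fin, nsmul_eq_mul]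
  field_simp
  ring

lemma sum_dev {n : ℕ} (hn : 0 < n) (a : Fin n → ℕ) {k : ℝ} (hk : ∑ i, (a i : ℝ) = k) :
    ∑ i, ((a i : ℝ) - k / n) = 0 := by
  have hn0 : (n : ℝ) ≠ 0 := by positivity
  rw [Finset.sum_sub_distrib, hk]
  simp only [Finset.sum_const, Finset.card_univ, Fintype.card_fin, nsmul_eq_mul]
  field_simp
  ring

/-- The coefficients `(a_i - k / n) / (m / n)` of the linear part of the test statistic. -/
noncomputable def linCoef (n m k : ℕ) (a : Fin n → ℕ) (i : Fin n) : ℝ :=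
  ((a i : ℝ) - (k : ℝ) / n) * (n / m)

/-- The coefficient `-(k / n) / (m / n)²` of the quadratic part of the test statistic. -/
noncomputable def pairCoef (n m k : ℕ) : ℝ := -((k : ℝ) * n / (m : ℝ) ^ 2)

lemma sum_linCoef {n : ℕ} (hn : 0 < n) (m k : ℕ) (a : Fin n → ℕ) (hk : ∑ i, (a i : ℝ) = k) :
    ∑ i, linCoef n m k a i = 0 := by
  simp only [linCoef]
  rw [← Finset.sum_mul, sum_dev hn a hk, zero_mul]

lemma sum_linCoef_sq {n : ℕ} (hn : 0 < n) (m k : ℕ) (a : Fin n → ℕ) (hk : ∑ i, (a i : ℝ) = k) :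
    ∑ i, linCoef n m k a i ^ 2 = n * plantV n a * (n / m) ^ 2 := by
  simp only [linCoef, mul_pow]
  rw [← Finset.sum_mul, sum_sq_dev hn a hk]

/-- The mean of the test statistic under the planted distribution. -/
noncomputable def planMean (n m k : ℕ) (a : Fin n → ℕ) : ℝ :=
  (n : ℝ) ^ 2 * plantV n a / m * (1 - k / (2 * m))
    + (k : ℝ) ^ 2 * n / (m : ℝ) ^ 2 / 2 * (1 - 1 / n)

/-- On a planted configuration the test statistic is its planted mean plus a centred statistic of
the same type in the unplanted balls. -/
lemma quadStat_planted {n M m k : ℕ} (hn : 0 < n) (hm0 : 0 < m) (a : Fin n → ℕ)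
    (hka : ∑ i, a i = k) (hm : m = M + k) {y : Fin n → ℕ} (hy : ∑ i, y i = M) :
    quadStat n m (linCoef n m k a) (pairCoef n m k) (y + a) = planMean n m k a
      + quadStat n M (fun i => (1 - k / m) * linCoef n m k a i) (pairCoef n m k) y := by
  have hkr : ∑ i, (a i : ℝ) = k := by exact_mod_cast hka
  have hn0 : (n : ℝ) ≠ 0 := by positivity
  have hmr : (m : ℝ) ≠ 0 := by positivity
  rw [quadStat_add hn a (by rw [hka, hm]) _ _ hy, hkr]
  have h1 : ∑ i, linCoef n m k a i * a i = n * plantV n a * (n / m) := by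
    rw [← sum_sq_dev hn a hkr, Finset.sum_mul]
    have := sum_dev hn a hkr
    have e : ∀ i, linCoef n m k a i * a i = ((a i : ℝ) - k / n) ^ 2 * (n / m)
        + (k / n * (n / m)) * ((a i : ℝ) - k / n) := by
      intro i; simp only [linCoef]; ring
    simp_rw [e]
    rw [Finset.sum_add_distrib, ← Finset.mul_sum, this, mul_zero, add_zero]
  have h2 : ∑ i, (a i : ℝ) ^ 2 = n * plantV n a + (k : ℝ) ^ 2 / n := by
    rw [plantV, hkr]; field_simp; ring
  have h3 : (fun i => linCoef n m k a i + pairCoef n m k * ((a i : ℝ) - k / n))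
      = fun i => (1 - k / m) * linCoef n m k a i := by
    funext i; simp only [linCoef, pairCoef]; field_simp
    ring
  rw [h1, h2, h3]
  congr 1
  simp only [planMean, pairCoef]
  field_simp
  ring

lemma planted_moments {n M m k : ℕ} (hn : 0 < n) (hm0 : 0 < m) (a : Fin n → ℕ)
    (hka : ∑ i, a i = k) (hm : m = M + k) :
    stExp n M (fun y => quadStat n m (linCoef n m k a) (pairCoef n m k) (y + a)) = planMean n m k a
    ∧ stExp n M (fun y => quadStat n m (linCoef n m k a) (pairCoef n m k) (y + a) ^ 2)
      ≤ planMean n m k a ^ 2 + (n : ℝ) ^ 2 * plantV n a / m + (k : ℝ) ^ 2 * n / (m : ℝ) ^ 2 / 2 := by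
  have hkr : ∑ i, (a i : ℝ) = k := by exact_mod_cast hka
  have hn0 : (0 : ℝ) < n := by positivity
  have hmr : (0 : ℝ) < m := by positivity
  have hn1 : (1 : ℝ) ≤ n := by exact_mod_cast hn
  have hα : ∑ i, (1 - (k : ℝ) / m) * linCoef n m k a i = 0 := by
    rw [← Finset.mul_sum, sum_linCoef hn m k a hkr, mul_zero]
  have hmM : (m : ℝ) = M + k := by exact_mod_cast hm
  have hM0 : (0 : ℝ) ≤ M := by positivity
  have hk0 : (0 : ℝ) ≤ k := by positivity
  have hV : 0 ≤ plantV n a := by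
    have := sum_sq_dev hn a hkr
    have h2 : 0 ≤ ∑ i, ((a i : ℝ) - (k : ℝ) / n) ^ 2 := Finset.sum_nonneg fun i _ => sq_nonneg _
    rw [this] at h2
    exact nonneg_of_mul_nonneg_right h2 hn0
  set c := planMean n m k a with hc
  set Q := quadStat n M (fun i => (1 - (k : ℝ) / m) * linCoef n m k a i) (pairCoef n m k) with hQ
  have hQ0 : stExp n M Q = 0 := stExp_quadStat hn hα _ M
  have hQ2 := stExp_quadStat_sq hn hα (pairCoef n m k) M
  rw [← hQ] at hQ2
  constructor
  · rw [stExp_congr (G := fun y => c + Q y) fun y hy => quadStat_planted hn hm0 a hka hm hy,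
      stExp_add, stExp_const hn, hQ0, add_zero]
  · rw [stExp_congr (G := fun y => c ^ 2 + (2 * c) * Q y + Q y ^ 2) fun y hy => by
      rw [quadStat_planted hn hm0 a hka hm hy]; ring]
    rw [stExp_add, stExp_add, stExp_const hn, stExp_mul, hQ0, hQ2]
    simp only [mul_pow]
    rw [← Finset.mul_sum, sum_linCoef_sq hn m k a hkr]
    have e1 : (M : ℝ) * ((1 - k / m) ^ 2 * (n * plantV n a * (n / m) ^ 2) / n)
        ≤ (n : ℝ) ^ 2 * plantV n a / m := by
      have : (n : ℝ) ^ 2 * plantV n a / m = m * (1 * (n * plantV n a * (n / m) ^ 2) / n) := by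
        field_simp
      rw [this]
      have h1 : (k : ℝ) / m ≤ 1 := by rw [div_le_one hmr]; linarith
      have h0 : 0 ≤ (k : ℝ) / m := by positivity
      have h2 : (1 - (k : ℝ) / m) ^ 2 ≤ 1 := by nlinarith
      have h3 : (M : ℝ) ≤ m := by linarith
      gcongr
    have e2 : pairCoef n m k ^ 2 * ((M : ℝ) * (M - 1) / 2 * (1 / n * (1 - 1 / n)))
        ≤ (k : ℝ) ^ 2 * n / (m : ℝ) ^ 2 / 2 := by
      have : (k : ℝ) ^ 2 * n / (m : ℝ) ^ 2 / 2
          = pairCoef n m k ^ 2 * ((m : ℝ) ^ 2 / 2 * (1 / n * 1)) := by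
        simp only [pairCoef]; field_simp
      rw [this]
      have h1 : (1 : ℝ) / n ≤ 1 := by rw [div_le_one hn0]; exact hn1
      have h1' : 0 ≤ (1 : ℝ) / n := by positivity
      refine mul_le_mul_of_nonneg_left ?_ (sq_nonneg _)
      refine mul_le_mul ?_ ?_ (mul_nonneg h1' (by linarith)) (by positivity)
      · have : (M : ℝ) ^ 2 ≤ (m : ℝ) ^ 2 := pow_le_pow_left₀ hM0 (by linarith) 2
        linarith [show (M : ℝ) * (M - 1) = (M : ℝ) ^ 2 - M by ring]
      · exact mul_le_mul_of_nonneg_left (by linarith) h1'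
    linarith

/-! ### The limit -/

/-- In the Intermediate regime,
`TV_A(m,n) → 2Φ((1/2)√(λ/c + 1/(2c²))) − 1`. -/
theorem intermediate_regime_tv_limit (A : (n : ℕ) → Fin n → ℕ) (m k : ℕ → ℕ)
    (hka : ∀ n, ∑ i, A n i = k n) (hkm : ∀ n, k n ≤ m n)
    (hk : Tendsto (fun n : ℕ => (k n : ℝ) / Real.sqrt n) atTop atTop)
    (lam c : ℝ) (hlam : 0 < lam) (hc : 0 < c)
    (hreg : IntermediateRegime A m k lam c) :
    Tendsto (fun n : ℕ => tvDist n (m n) (A n)) atTop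
      (𝓝 (2 * stdNormalCDF ((1/2) * Real.sqrt (lam / c + 1 / (2 * c ^ 2))) - 1)) := by
  obtain ⟨hx, hy⟩ := hreg
  have hhalf := planted_ge_half hka hk hx
  have hkr : ∀ n, ∑ i, (A n i : ℝ) = k n := fun n => by exact_mod_cast hka n
  have hs : Tendsto (fun n : ℕ => Real.sqrt n) atTop atTop :=
    Real.tendsto_sqrt_atTop.comp tendsto_natCast_atTop_atTop
  set M : ℕ → ℕ := fun n => m n - k n with hMdef
  have hmM : ∀ n, m n = M n + k n := fun n => (Nat.sub_add_cancel (hkm n)).symm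
  have hmMr : ∀ n, (m n : ℝ) = M n + k n := fun n => by exact_mod_cast hmM n
  have hpos : ∀ᶠ n : ℕ in atTop, 0 < n ∧ (0 : ℝ) < k n ∧ (0 : ℝ) < m n := by
    filter_upwards [hhalf, eventually_gt_atTop 0] with n h hn
    have hn0 : (0 : ℝ) < n := by exact_mod_cast hn
    have hk0 : (0 : ℝ) < k n := by linarith
    exact ⟨hn, hk0, hk0.trans_le (by exact_mod_cast hkm n)⟩
  -- `W = n² V / m`, `r = k √n / m`, `ρ = M / m` tend to `λ / c`, `1 / c` and `1`; the mean loads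
  -- `m / n` and `ν = M / n` tend to infinity.
  set W : ℕ → ℝ := fun n => (n : ℝ) ^ 2 * plantV n (A n) / m n with hWdef
  set r : ℕ → ℝ := fun n => (k n : ℝ) * Real.sqrt n / m n with hrdef
  set ρ : ℕ → ℝ := fun n => (M n : ℝ) / m n with hρdef
  set ν : ℕ → ℝ := fun n => (M n : ℝ) / n with hνdef
  have hr : Tendsto r atTop (𝓝 (1 / c)) := by
    have := hy.inv₀ hc.ne'
    rw [one_div]
    refine this.congr fun n => ?_
    simp only [hrdef, inv_div]
  have hW : Tendsto W atTop (𝓝 (lam / c)) := by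
    have := hx.mul hr
    rw [mul_one_div] at this
    refine this.congr' ?_
    filter_upwards [hpos] with n ⟨hn, hk0, hm0⟩
    have hn0 : (0 : ℝ) < n := by exact_mod_cast hn
    have e : (n : ℝ) ^ ((3 : ℝ) / 2) = n * Real.sqrt n := by
      rw [show (3 : ℝ) / 2 = 1 + 1 / 2 by norm_num, Real.rpow_add hn0, Real.rpow_one,
        ← Real.sqrt_eq_rpow]
    simp only [hWdef, hrdef]
    rw [e]
    have e2 := Real.mul_self_sqrt hn0.le
    calc _ = (n : ℝ) * (Real.sqrt n * Real.sqrt n) * plantV n (A n) / m n := by field_simp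
      _ = _ := by rw [e2]; ring
  have hr2 : ∀ n, (k n : ℝ) ^ 2 * n / (m n : ℝ) ^ 2 = r n ^ 2 := by
    intro n
    simp only [hrdef, div_pow, mul_pow]
    rw [Real.sq_sqrt (Nat.cast_nonneg n)]
  have hkm0 : Tendsto (fun n => (k n : ℝ) / m n) atTop (𝓝 0) := by
    have := hr.div_atTop hs
    refine this.congr' ?_
    filter_upwards [hpos] with n ⟨hn, hk0, hm0⟩
    have hn0 : (0 : ℝ) < n := by exact_mod_cast hn
    have hsp : 0 < Real.sqrt n := Real.sqrt_pos.2 hn0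
    simp only [hrdef]; field_simp
  have hρ : Tendsto ρ atTop (𝓝 1) := by
    have := hkm0.const_sub 1
    rw [sub_zero] at this
    refine this.congr' ?_
    filter_upwards [hpos] with n ⟨hn, hk0, hm0⟩
    simp only [hρdef]
    rw [eq_div_iff hm0.ne', sub_mul, div_mul_cancel₀ _ hm0.ne', hmMr n]; ring
  have hμ : Tendsto (fun n => (m n : ℝ) / n) atTop atTop := by
    refine (hk.atTop_mul_pos hc hy).congr' ?_
    filter_upwards [hpos] with n ⟨hn, hk0, hm0⟩
    have hn0 : (0 : ℝ) < n := by exact_mod_cast hn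
    have hsp : 0 < Real.sqrt n := Real.sqrt_pos.2 hn0
    have e2 := Real.mul_self_sqrt hn0.le
    calc _ = (m n : ℝ) / (Real.sqrt n * Real.sqrt n) := by field_simp
      _ = _ := by rw [e2]
  have hν : Tendsto ν atTop atTop := by
    refine (hμ.atTop_mul_pos one_pos hρ).congr' ?_
    filter_upwards [hpos] with n ⟨hn, hk0, hm0⟩
    simp only [hρdef, hνdef]; field_simp
  have hνi : Tendsto (fun n => 1 / ν n) atTop (𝓝 0) := by
    simp only [one_div]
    exact hν.inv_tendsto_atTop
  set σ := Real.sqrt (lam / c + 1 / (2 * c ^ 2)) with hσdef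
  have hσ : 0 < σ := Real.sqrt_pos.2 (by positivity)
  have hσ2 : σ ^ 2 = lam / c + (1 / c) ^ 2 / 2 := by
    rw [hσdef, Real.sq_sqrt (by positivity)]; field_simp
  have hT : ∀ f : BoundedContinuousFunction ℝ ℝ, Tendsto (fun n => stExp n (m n) (fun z =>
      f (quadStat n (m n) (linCoef n (m n) (k n) (A n)) (pairCoef n (m n) (k n)) z)))
      atTop (𝓝 (∫ x, f x ∂ProbabilityTheory.gaussianReal 0 (σ ^ 2).toNNReal)) := by
    intro f
    refine tendsto_stExp_of_chf (sq_nonneg σ) (fun t => ?_) f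
    rw [hσ2]
    refine tendsto_quadChf (b := fun n => Real.sqrt (W n / ((m n : ℝ) / n)))
      (by positivity) ?_ ?_ ?_ hμ ?_ ?_ t
    · filter_upwards [eventually_gt_atTop 0] with n hn
      exact sum_linCoef hn _ _ _ (hkr n)
    · filter_upwards [hpos] with n ⟨hn, hk0, hm0⟩ x
      refine Real.abs_le_sqrt ?_
      have hn0 : (0 : ℝ) < n := by exact_mod_cast hn
      have h1 := Finset.single_le_sum (f := fun i => linCoef n (m n) (k n) (A n) i ^ 2)
        (fun i _ => sq_nonneg _) (Finset.mem_univ x)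
      rw [sum_linCoef_sq hn _ _ _ (hkr n)] at h1
      refine h1.trans_eq ?_
      simp only [hWdef]; field_simp
    · have := (hW.div_atTop hμ).sqrt
      rwa [Real.sqrt_zero] at this
    · refine hW.congr' ?_
      filter_upwards [hpos] with n ⟨hn, hk0, hm0⟩
      have hn0 : (0 : ℝ) < n := by exact_mod_cast hn
      rw [sum_linCoef_sq hn _ _ _ (hkr n)]
      simp only [hWdef]; field_simp
    · refine hr.congr' ?_
      filter_upwards [hpos] with n ⟨hn, hk0, hm0⟩
      have hn0 : (0 : ℝ) < n := by exact_mod_cast hn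
      have hsp : 0 < Real.sqrt n := Real.sqrt_pos.2 hn0
      have e2 := Real.sq_sqrt hn0.le
      rw [pairCoef, abs_neg, abs_of_nonneg (by positivity)]
      simp only [hrdef]
      field_simp
      rw [e2]
  have hmean : Tendsto (fun n => planMean n (m n) (k n) (A n)) atTop (𝓝 (σ ^ 2)) := by
    have h1 := hW.mul ((hkm0.div_const 2).const_sub 1)
    have h2 := ((hr.pow 2).div_const 2).mul (tendsto_one_div_atTop_nhds_zero_nat.const_sub (1 : ℝ))
    have h3 := h1.add h2
    rw [zero_div, sub_zero, mul_one, mul_one, ← hσ2] at h3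
    refine h3.congr fun n => ?_
    rw [planMean, hr2 n]
    simp only [hWdef]
    rw [div_div, mul_comm (m n : ℝ) 2]
  have hE : Tendsto (fun n => stExp n (M n) (fun y => quadStat n (m n)
      (linCoef n (m n) (k n) (A n)) (pairCoef n (m n) (k n)) (y + A n))) atTop (𝓝 (σ ^ 2)) := by
    refine hmean.congr' ?_
    filter_upwards [hpos] with n ⟨hn, hk0, hm0⟩
    exact (planted_moments hn (by exact_mod_cast hm0) (A n) (hka n) (hmM n)).1.symm
  have hB : ∀ᶠ n in atTop, stExp n (M n) (fun y => quadStat n (m n)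
      (linCoef n (m n) (k n) (A n)) (pairCoef n (m n) (k n)) (y + A n) ^ 2)
      ≤ (σ ^ 2) ^ 2 + lam / c + (1 / c) ^ 2 / 2 + 1 := by
    have h1 := ((hmean.pow 2).add hW).add ((hr.pow 2).div_const 2)
    filter_upwards [hpos, h1.eventually_lt_const (lt_add_one _)] with n ⟨hn, hk0, hm0⟩ h
    have h2 := (planted_moments hn (by exact_mod_cast hm0) (A n) (hka n) (hmM n)).2
    rw [hr2 n] at h2
    exact h2.trans h.le
  -- `R = (∑ a_i²) / ν²` and `κ = k / ν³` carry the error terms of the relative entropy bound.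
  set R : ℕ → ℝ := fun n => W n / ρ n * (1 / ν n) + r n ^ 2 / ρ n ^ 2 with hRdef
  set κ : ℕ → ℝ := fun n => r n ^ 2 / ρ n ^ 2 * (n / k n) * (1 / ν n) with hκdef
  have hWρ : Tendsto (fun n => W n / ρ n) atTop (𝓝 (lam / c)) := by
    have := hW.div hρ one_ne_zero
    rwa [div_one] at this
  have hrρ : Tendsto (fun n => r n ^ 2 / ρ n ^ 2) atTop (𝓝 ((1 / c) ^ 2)) := by
    have := (hr.pow 2).div (hρ.pow 2) (by norm_num)
    rwa [one_pow, div_one] at this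
  have hR : Tendsto R atTop (𝓝 ((1 / c) ^ 2)) := by
    have := (hWρ.mul hνi).add hrρ
    rwa [mul_zero, zero_add] at this
  have hκ : Tendsto κ atTop (𝓝 0) := by
    have hup : Tendsto (fun n => r n ^ 2 / ρ n ^ 2 * 2 * (1 / ν n)) atTop (𝓝 0) := by
      simpa using (hrρ.mul_const 2).mul hνi
    refine tendsto_of_tendsto_of_tendsto_of_le_of_le' tendsto_const_nhds hup ?_ ?_
    · filter_upwards [hν.eventually_gt_atTop 0] with n h
      simp only [hκdef]; positivity
    · filter_upwards [hν.eventually_gt_atTop 0, hhalf, hpos] with n h h2 ⟨hn, hk0, hm0⟩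
      have : (n : ℝ) / k n ≤ 2 := by rw [div_le_iff₀ hk0]; exact h2
      simp only [hκdef]; gcongr
  have hkM : Tendsto (fun n => (k n : ℝ) / m n / ρ n) atTop (𝓝 0) := by
    have := hkm0.div hρ one_ne_zero
    rwa [div_one] at this
  refine tendsto_tvDist_of_stat (M := M) (fun n => by rw [hka n]; exact hmM n) hσ hT
    (U := fun n => W n / ρ n / 2 + R n / 4 + (3 / 2 * (R n * (1 / ν n)) + 3 / 2 * κ n)
      + ((k n : ℝ) / m n / ρ n * (1 / 2 + 3 / 2 * (1 / ν n)) + 3 * κ n)) ?_ ?_ hE hB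
  · filter_upwards [hpos, hν.eventually_ge_atTop 1, eventually_ge_atTop 6]
      with n ⟨hn, hk0, hm0⟩ h1 h6
    have hn0 : (0 : ℝ) < n := by exact_mod_cast hn
    have hnM : n ≤ M n := by
      simp only [hνdef] at h1
      rw [le_div_iff₀ hn0, one_mul] at h1
      exact_mod_cast h1
    have hM0 : (0 : ℝ) < M n := by exact_mod_cast lt_of_lt_of_le hn hnM
    have h2 : ∑ i, (A n i : ℝ) ^ 2 = n * plantV n (A n) + (k n : ℝ) ^ 2 / n := by
      rw [plantV, hkr n]; field_simp; ring
    have h := stExp_log_likRatio_le h6 hnM (A n) (m := m n) (by rw [hka n]; exact hmM n)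
      (ν := ν n) rfl rfl rfl (hkr n).symm
    rw [sum_sq_dev hn _ (hkr n), h2] at h
    refine h.trans_eq ?_
    simp only [hRdef, hκdef, ← hr2 n, div_eq_mul_inv]
    simp only [hWdef, hρdef, hνdef]
    field_simp
  · have h := (((hWρ.div_const 2).add (hR.div_const 4)).add
      (((hR.mul hνi).const_mul (3 / 2)).add (hκ.const_mul (3 / 2)))).add
      ((hkM.mul ((hνi.const_mul (3 / 2)).const_add (1 / 2))).add (hκ.const_mul 3))
    have e : σ ^ 2 / 2 = lam / c / 2 + (1 / c) ^ 2 / 4 + (3 / 2 * ((1 / c) ^ 2 * 0) + 3 / 2 * 0)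
        + (0 * (1 / 2 + 3 / 2 * 0) + 3 * 0) := by rw [hσ2]; ring
    rw [e]; exact h
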